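/- arXiv:1011.4884 — 2 statements merged into one kernel-verified Lean document; each statement's English description precedes it below -/
import Mathlib

section
/- (Curve Selection Lemma at infinity.) Let U ⊆ ℝⁿ be a semialgebraic set and g : ℝⁿ → ℝ a polynomial function. Suppose there is a sequence (x_k) in U with ‖x_k‖ → ∞ and g(x_k) → c, where c is an element of the extended reals [-∞, +∞]. Then there exist an integer α < 0, a real ε > 0, and a real-analytic map y : (-ε, ε) → ℝⁿ with y(0) ≠ 0 such that the path x(t) := t^α · y(t) satisfies x(t) ∈ U for all t ∈ (0, ε) and g(x(t)) → c (in the extended reals) as t → 0⁺. -/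
open Complex Filter Finset

noncomputable section

abbrev MixedCoeff (n : ℕ) := ((Fin n → ℕ) × (Fin n → ℕ)) →₀ ℂ

namespace Mixed

variable {n : ℕ}

/-- Evaluation of a mixed polynomial given by its coefficient function `c`:
`f(z) = Σ c(ν,μ) zᵛ z̄ᵘ`. -/
def eval (c : MixedCoeff n) (z : Fin n → ℂ) : ℂ :=
  c.sum fun p a => a * (∏ i, z i ^ p.1 i) * ∏ i, (starRingEnd ℂ) (z i) ^ p.2 i

/-- `∂f/∂z_i` evaluated at `(z, z̄)`. -/
def dz (c : MixedCoeff n) (i : Fin n) (z : Fin n → ℂ) : ℂ :=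
  c.sum fun p a => a * (p.1 i) * (∏ j, z j ^ (p.1 j - if j = i then 1 else 0)) *
    ∏ j, (starRingEnd ℂ) (z j) ^ p.2 j

/-- `∂f/∂z̄_i` evaluated at `(z, z̄)`. -/
def dzbar (c : MixedCoeff n) (i : Fin n) (z : Fin n → ℂ) : ℂ :=
  c.sum fun p a => a * (p.2 i) * (∏ j, z j ^ p.1 j) *
    ∏ j, (starRingEnd ℂ) (z j) ^ (p.2 j - if j = i then 1 else 0)

/-- The singular locus of `f` as a real map `ℝ²ⁿ → ℝ²`. -/
def Sing (c : MixedCoeff n) : Set (Fin n → ℂ) :=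
  {z | ¬ Function.Surjective ⇑(fderiv ℝ (eval c) z)}

/-- The Milnor set `M(f)`. -/
def Milnor (c : MixedCoeff n) : Set (Fin n → ℂ) :=
  {z | ∃ (l : ℝ) (m : ℂ), m ≠ 0 ∧
    ∀ i, (l : ℂ) * z i = m * (starRingEnd ℂ) (dz c i z) + (starRingEnd ℂ) m * dzbar c i z}

/-- The set `S(f)` of asymptotic ρ-nonregular values. -/
def Sset (c : MixedCoeff n) : Set ℂ :=
  {v | ∃ zk : ℕ → (Fin n → ℂ), (∀ k, zk k ∈ Milnor c) ∧
    Tendsto (fun k => ‖zk k‖) atTop atTop ∧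
    Tendsto (fun k => eval c (zk k)) atTop (nhds v)}

/-- The point of `ℝⁿ` attached to the exponent pair `(ν,μ)`, namely `ν+μ`. -/
def suppPt (p : (Fin n → ℕ) × (Fin n → ℕ)) : Fin n → ℝ := fun i => ((p.1 i + p.2 i : ℕ) : ℝ)

/-- The support of `f`, as a subset of `ℝⁿ`. -/
def suppPts (c : MixedCoeff n) : Set (Fin n → ℝ) := suppPt '' (c.support : Set _)

/-- The Newton polyhedron `Γ₀(f)`: convex hull of `{0} ∪ supp(f)`. -/
def Gamma0 (c : MixedCoeff n) : Set (Fin n → ℝ) := convexHull ℝ (insert 0 (suppPts c))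

/-- `supp(f)‾`: the convex hull of `supp(f) \ {0}`. -/
def suppBar (c : MixedCoeff n) : Set (Fin n → ℝ) := convexHull ℝ (suppPts c \ {0})

/-- `F` is a face of the (compact convex) set `C`: either `C` itself or the set of
minimizers on `C` of a linear functional, and nonempty. -/
def IsFaceOf (C F : Set (Fin n → ℝ)) : Prop :=
  F.Nonempty ∧ (F = C ∨ ∃ a : Fin n → ℝ,
    F = {x ∈ C | ∀ y ∈ C, ∑ i, a i * x i ≤ ∑ i, a i * y i})

/-- `Δ` is a face of the Newton boundary at infinity `Γ⁺(f)`: a face of `Γ₀(f)` not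
containing the origin. -/
def IsGammaPlusFace (c : MixedCoeff n) (Δ : Set (Fin n → ℝ)) : Prop :=
  IsFaceOf (Gamma0 c) Δ ∧ (0 : Fin n → ℝ) ∉ Δ

/-- `Γ⁺(f)` as a subset of `ℝⁿ`: the union of the faces of `Γ₀(f)` not containing `0`. -/
def GammaPlusSet (c : MixedCoeff n) : Set (Fin n → ℝ) :=
  {x | ∃ Δ, IsGammaPlusFace c Δ ∧ x ∈ Δ}

/-- The truncation `f_Δ` of `f` to a subset `Δ ⊆ ℝⁿ`. -/
def trunc (c : MixedCoeff n) (Δ : Set (Fin n → ℝ)) : MixedCoeff n :=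
  @Finsupp.filter _ _ _ (fun p => suppPt p ∈ Δ) (Classical.decPred _) c

/-- Newton non-degeneracy: for every face `Δ` of `Γ⁺(f)`,
`Sing f_Δ ∩ f_Δ⁻¹(0) ∩ (ℂ*)ⁿ = ∅`. -/
def NewtonNonDeg (c : MixedCoeff n) : Prop :=
  ∀ Δ, IsGammaPlusFace c Δ → ∀ z : Fin n → ℂ, (∀ i, z i ≠ 0) →
    eval (trunc c Δ) z = 0 → z ∉ Sing (trunc c Δ)

/-- Newton strong non-degeneracy: for every face `Δ` of `Γ⁺(f)`,
`Sing f_Δ ∩ (ℂ*)ⁿ = ∅`. -/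
def NewtonStronglyNonDeg (c : MixedCoeff n) : Prop :=
  ∀ Δ, IsGammaPlusFace c Δ → ∀ z : Fin n → ℂ, (∀ i, z i ≠ 0) →
    z ∉ Sing (trunc c Δ)

/-- `Δ` is a bad face of `supp(f)‾`. -/
def IsBadFace (c : MixedCoeff n) (Δ : Set (Fin n → ℝ)) : Prop :=
  IsFaceOf (suppBar c) Δ ∧ (0 : Fin n → ℝ) ∈ affineSpan ℝ Δ ∧
    ∃ a : Fin n → ℝ, (∃ i, a i < 0) ∧ (∃ j, 0 < a j) ∧
      {x ∈ suppBar c | ∑ i, a i * x i = 0} = Δ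

/-- `f` depends effectively on all its variables. -/
def EffectiveAll (c : MixedCoeff n) : Prop :=
  ∀ i, ∃ p ∈ c.support, 0 < p.1 i + p.2 i

/-- The Euclidean norm on `ℂⁿ`. -/
def norm2 (v : Fin n → ℂ) : ℝ := Real.sqrt (∑ i, Complex.normSq (v i))

end Mixed

/-- A semialgebraic subset of `ℝⁿ`: a finite union of sets each defined by finitely many
polynomial equations and finitely many strict polynomial inequalities. -/
def IsSemialgebraic {n : ℕ} (U : Set (Fin n → ℝ)) : Prop :=
  ∃ (m : ℕ) (E Q : Fin m → Finset (MvPolynomial (Fin n) ℝ)),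
    U = ⋃ k : Fin m, {x | (∀ p ∈ E k, MvPolynomial.eval x p = 0) ∧
                          (∀ q ∈ Q k, 0 < MvPolynomial.eval x q)}

namespace CSL

open Polynomial

section IVT

variable {R : Type} [Field R] [LinearOrder R] [IsStrictOrderedRing R]

/-- The intermediate value property for polynomials. -/
def PolyIVT (R : Type) [Field R] [LinearOrder R] : Prop :=
  ∀ (p : R[X]) (a b : R), a < b → p.eval a * p.eval b < 0 → ∃ c, a < c ∧ c < b ∧ p.eval c = 0

theorem rolle (h : PolyIVT R) (p : R[X]) (hp : p ≠ 0) (a b : R) (hab : a < b)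
    (ha : p.eval a = 0) (hb : p.eval b = 0) : ∃ c, a < c ∧ c < b ∧ p.derivative.eval c = 0 := by
  classical
  obtain ⟨b', hb', hmin⟩ := Finset.exists_min_image (p.roots.toFinset.filter (fun x => a < x)) id
    ⟨b, by simp [hp, hab, hb]⟩
  simp only [Finset.mem_filter, Multiset.mem_toFinset, mem_roots hp, IsRoot.def, id] at hb' hmin
  have hb'b : b' ≤ b := hmin b ⟨hb, hab⟩
  suffices ∃ c, a < c ∧ c < b' ∧ p.derivative.eval c = 0 by
    obtain ⟨c, h1, h2, h3⟩ := this
    exact ⟨c, h1, h2.trans_le hb'b, h3⟩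
  obtain ⟨p1, hp1, hp1a⟩ := exists_eq_pow_rootMultiplicity_mul_and_not_dvd p hp a
  have hm : 0 < p.rootMultiplicity a := (rootMultiplicity_pos hp).2 ha
  have hp10 : p1 ≠ 0 := by rintro rfl; simp at hp1a
  rw [dvd_iff_isRoot, IsRoot.def] at hp1a
  have hp1b : p1.eval b' = 0 := by
    have := hb'.1
    rw [hp1, eval_mul, eval_pow, eval_sub, eval_X, eval_C] at this
    rcases mul_eq_zero.1 this with h | h
    · exact absurd (eq_zero_of_pow_eq_zero h) (sub_ne_zero.2 hb'.2.ne')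
    · exact h
  obtain ⟨q, hq, hqb⟩ := exists_eq_pow_rootMultiplicity_mul_and_not_dvd p1 hp10 b'
  have hn : 0 < p1.rootMultiplicity b' := (rootMultiplicity_pos hp10).2 hp1b
  rw [dvd_iff_isRoot, IsRoot.def] at hqb
  obtain ⟨k, hk⟩ : ∃ k, p.rootMultiplicity a = k + 1 := ⟨_, (Nat.succ_pred_eq_of_pos hm).symm⟩
  obtain ⟨l, hl⟩ : ∃ k, p1.rootMultiplicity b' = k + 1 := ⟨_, (Nat.succ_pred_eq_of_pos hn).symm⟩
  rw [hk] at hp1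
  rw [hl] at hq
  have hqa : q.eval a ≠ 0 := by
    intro h0
    apply hp1a
    rw [hq, eval_mul, h0, mul_zero]
  have hpq : p = (X - C a) ^ (k + 1) * ((X - C b') ^ (l + 1) * q) := by rw [← hq, ← hp1]
  have hpos : 0 < q.eval a * q.eval b' := by
    rcases lt_trichotomy (q.eval a * q.eval b') 0 with h1 | h1 | h1
    · obtain ⟨c, hc1, hc2, hc3⟩ := h q a b' hb'.2 h1
      have : p.eval c = 0 := by rw [hpq, eval_mul, eval_mul, hc3]; simp
      exact absurd (hmin c ⟨this, hc1⟩) (not_le.2 hc2)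
    · rcases mul_eq_zero.1 h1 with h | h
      · exact absurd h hqa
      · exact absurd h hqb
    · exact h1
  set q1 : R[X] := C ((k : R) + 1) * (X - C b') * q + C ((l : R) + 1) * (X - C a) * q +
    (X - C a) * (X - C b') * q.derivative with hq1
  have hder : p.derivative = (X - C a) ^ k * (X - C b') ^ l * q1 := by
    rw [hpq, hq1]
    simp only [derivative_mul, derivative_pow, derivative_sub, derivative_X, derivative_C,
      Nat.cast_add, Nat.cast_one, Nat.add_sub_cancel, map_add, map_natCast, map_one]
    ring
  have hneg : q1.eval a * q1.eval b' < 0 := by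
    have e1 : q1.eval a = ((k : R) + 1) * (a - b') * q.eval a := by simp [hq1]
    have e2 : q1.eval b' = ((l : R) + 1) * (b' - a) * q.eval b' := by simp [hq1]
    rw [e1, e2]
    have : 0 < ((k : R) + 1) * ((l : R) + 1) * (b' - a) ^ 2 * (q.eval a * q.eval b') := by
      have := sub_pos.2 hb'.2
      positivity
    linarith
  obtain ⟨c, hc1, hc2, hc3⟩ := h q1 a b' hb'.2 hneg
  exact ⟨c, hc1, hc2, by rw [hder, eval_mul, hc3, mul_zero]⟩

theorem mvt (h : PolyIVT R) (p : R[X]) (a b : R) (hab : a < b) :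
    ∃ c, a < c ∧ c < b ∧ p.eval b - p.eval a = p.derivative.eval c * (b - a) := by
  have hba : b - a ≠ 0 := (sub_pos.2 hab).ne'
  set m := (p.eval b - p.eval a) / (b - a) with hm
  have hmm : m * (b - a) = p.eval b - p.eval a := by rw [hm]; field_simp
  set f : R[X] := p - C (p.eval a) - C m * (X - C a) with hf
  by_cases hf0 : f = 0
  · obtain ⟨c, h1, h2⟩ := exists_between hab
    refine ⟨c, h1, h2, ?_⟩
    have : f.derivative.eval c = 0 := by rw [hf0]; simp
    simp [hf] at this
    rw [← hmm]
    congr 1; linarith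
  · obtain ⟨c, h1, h2, h3⟩ := rolle h f hf0 a b hab (by simp [hf]) (by simp [hf, hmm])
    refine ⟨c, h1, h2, ?_⟩
    simp [hf] at h3
    rw [← hmm]
    congr 1; linarith

theorem mono_of_deriv_pos (h : PolyIVT R) (p : R[X]) (a b : R) (hab : a < b)
    (hd : ∀ c, a < c → c < b → 0 < p.derivative.eval c) : p.eval a < p.eval b := by
  obtain ⟨c, h1, h2, h3⟩ := mvt h p a b hab
  have := mul_pos (hd c h1 h2) (sub_pos.2 hab)
  linarith

theorem eventually_large (p : R[X]) (hp : 0 < p.leadingCoeff) (hd : 0 < p.natDegree) (B : R) :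
    ∃ M, ∀ x, M ≤ x → B ≤ p.eval x := by
  induction hn : p.natDegree generalizing p B with
  | zero => omega
  | succ n ih =>
    have hdiv : ∀ x, p.eval x = p.divX.eval x * x + p.coeff 0 := by
      intro x
      conv_lhs => rw [← divX_mul_X_add p]
      simp
    have hnd : p.divX.natDegree = n := by rw [natDegree_divX_eq_natDegree_tsub_one, hn]; simp
    have hlc : p.divX.leadingCoeff = p.leadingCoeff := by
      rw [leadingCoeff, hnd, coeff_divX, leadingCoeff, hn]
    obtain ⟨δ, hδ, M, hM⟩ : ∃ δ : R, 0 < δ ∧ ∃ M, ∀ x, M ≤ x → δ ≤ p.divX.eval x := by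
      rcases Nat.eq_zero_or_pos n with h0 | h0
      · refine ⟨p.leadingCoeff, hp, 0, fun x _ => ?_⟩
        rw [eq_C_of_natDegree_eq_zero (hnd.trans h0), eval_C]
        rw [← hlc, leadingCoeff, hnd, h0]
      · obtain ⟨M, hM⟩ := ih p.divX (by rw [hlc]; exact hp) (by omega) 1 hnd
        exact ⟨1, one_pos, M, hM⟩
    refine ⟨max (max M 0) ((B - p.coeff 0) / δ), fun x hx => ?_⟩
    have h1 : M ≤ x := (le_max_left _ _).trans ((le_max_left _ _).trans hx)
    have h2 : 0 ≤ x := (le_max_right _ _).trans ((le_max_left _ _).trans hx)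
    have h3 : (B - p.coeff 0) / δ ≤ x := (le_max_right _ _).trans hx
    rw [div_le_iff₀ hδ] at h3
    rw [hdiv]
    have := mul_le_mul_of_nonneg_right (hM x h1) h2
    linarith

theorem eventually_pos (p : R[X]) (hp : 0 < p.leadingCoeff) :
    ∃ M, ∀ x, M ≤ x → 0 < p.eval x := by
  rcases Nat.eq_zero_or_pos p.natDegree with h0 | h0
  · refine ⟨0, fun x _ => ?_⟩
    rw [eq_C_of_natDegree_eq_zero h0, eval_C]
    rwa [leadingCoeff, h0] at hp
  · obtain ⟨M, hM⟩ := eventually_large p hp h0 1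
    exact ⟨M, fun x hx => one_pos.trans_le (hM x hx)⟩

theorem exists_pos_above (p : R[X]) (hd : 0 < p.natDegree) (y : R)
    (h : ∀ c, y < c → 0 < p.derivative.eval c) : ∃ M, y < M ∧ 0 < p.eval M := by
  have hp : p ≠ 0 := by rintro rfl; simp at hd
  rcases lt_trichotomy p.leadingCoeff 0 with h1 | h1 | h1
  · exfalso
    have hdl : p.derivative.leadingCoeff = p.leadingCoeff * p.natDegree := by
      rw [leadingCoeff, natDegree_derivative, coeff_derivative, leadingCoeff,
        Nat.sub_add_cancel hd]
      congr 1
      rw [← Nat.cast_add_one, Nat.sub_add_cancel hd]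
    have hpos : 0 < (-p.derivative).leadingCoeff := by
      rw [leadingCoeff_neg, hdl]
      have : (0 : R) < p.natDegree := by exact_mod_cast hd
      have := mul_neg_of_neg_of_pos h1 this
      linarith
    obtain ⟨M, hM⟩ := eventually_pos _ hpos
    have e1 := hM (max M (y + 1)) (le_max_left _ _)
    have e2 := h (max M (y + 1)) (lt_of_lt_of_le (lt_add_one y) (le_max_right _ _))
    rw [eval_neg] at e1
    linarith
  · exact absurd (leadingCoeff_eq_zero.1 h1) hp
  · obtain ⟨M, hM⟩ := eventually_pos p h1
    exact ⟨max M (y + 1), lt_of_lt_of_le (lt_add_one y) (le_max_right _ _), hM _ (le_max_left _ _)⟩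

theorem exists_neg_below (p : R[X]) (hd : 0 < p.natDegree) (y : R)
    (h : ∀ c, c < y → 0 < p.derivative.eval c) : ∃ M, M < y ∧ p.eval M < 0 := by
  obtain ⟨M, hM1, hM2⟩ := exists_pos_above (-(p.comp (-X))) (by
    rw [natDegree_neg, natDegree_comp]; simpa using hd) (-y) (fun c hc => by
      have := h (-c) (by linarith)
      simpa [derivative_comp] using this)
  refine ⟨-M, by linarith, ?_⟩
  simp at hM2
  exact hM2

end IVT

section Match

set_option linter.unusedSectionVars false

variable {R₁ R₂ : Type} [Field R₁] [LinearOrder R₁] [IsStrictOrderedRing R₁]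
  [Field R₂] [LinearOrder R₂] [IsStrictOrderedRing R₂]

/-- finite partial order isomorphism -/
def Iso (Z : Finset (R₁ × R₂)) : Prop := ∀ p ∈ Z, ∀ q ∈ Z, (p.1 < q.1 ↔ p.2 < q.2)

/-- `y₁` and `y₂` lie in corresponding cells -/
def Near (Z : Finset (R₁ × R₂)) (y₁ : R₁) (y₂ : R₂) : Prop :=
  ∀ p ∈ Z, (p.1 < y₁ ↔ p.2 < y₂) ∧ (y₁ < p.1 ↔ y₂ < p.2)

/-- swap -/
def sw (Z : Finset (R₁ × R₂)) : Finset (R₂ × R₁) := Z.map (Equiv.prodComm R₁ R₂).toEmbedding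

theorem mem_sw {Z : Finset (R₁ × R₂)} {p : R₂ × R₁} : p ∈ sw Z ↔ (p.2, p.1) ∈ Z := by
  simp only [sw, Finset.mem_map, Equiv.coe_toEmbedding, Prod.exists]
  constructor
  · rintro ⟨a, b, h, rfl⟩; exact h
  · intro h; exact ⟨p.2, p.1, h, rfl⟩

theorem Iso.sw {Z : Finset (R₁ × R₂)} (h : Iso Z) : Iso (sw Z) := by
  intro p hp q hq
  rw [mem_sw] at hp hq
  exact (h _ hp _ hq).symm

theorem near_sw {Z : Finset (R₁ × R₂)} {y₁ : R₁} {y₂ : R₂} :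
    Near (sw Z) y₂ y₁ ↔ Near Z y₁ y₂ := by
  constructor
  · intro h p hp
    have := h (p.2, p.1) (mem_sw.2 hp)
    exact ⟨this.1.symm, this.2.symm⟩
  · intro h p hp
    have := h (p.2, p.1) (mem_sw.1 hp)
    exact ⟨this.1.symm, this.2.symm⟩

theorem Iso.near {Z : Finset (R₁ × R₂)} (h : Iso Z) {p : R₁ × R₂} (hp : p ∈ Z) :
    Near Z p.1 p.2 := fun q hq => ⟨h q hq p hp, h p hp q hq⟩

theorem Near.eq {Z : Finset (R₁ × R₂)} {y₁ : R₁} {y₂ : R₂} (h : Near Z y₁ y₂) {p : R₁ × R₂}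
    (hp : p ∈ Z) (e : p.1 = y₁) : p.2 = y₂ := by
  obtain ⟨h1, h2⟩ := h p hp
  subst e
  simp only [lt_irrefl, false_iff, not_lt] at h1 h2
  exact le_antisymm h2 h1

theorem Iso.across {Z : Finset (R₁ × R₂)} (h : Iso Z) (y₁ : R₁) : ∃ y₂, Near Z y₁ y₂ := by
  classical
  by_cases hy : ∃ p ∈ Z, p.1 = y₁
  · obtain ⟨p, hp, rfl⟩ := hy
    exact ⟨p.2, h.near hp⟩
  · push Not at hy
    obtain ⟨m, hm1, hm2⟩ := Order.exists_between_finsets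
      ((Z.filter (fun p => p.1 < y₁)).image Prod.snd)
      ((Z.filter (fun p => y₁ < p.1)).image Prod.snd) (by
        intro x hx y hy
        simp only [Finset.mem_image, Finset.mem_filter] at hx hy
        obtain ⟨p, ⟨hp, hp1⟩, rfl⟩ := hx
        obtain ⟨q, ⟨hq, hq1⟩, rfl⟩ := hy
        exact (h p hp q hq).1 (hp1.trans hq1))
    refine ⟨m, fun p hp => ?_⟩
    have a1 : p.1 < y₁ → p.2 < m := fun h => hm1 _ (Finset.mem_image_of_mem _
      (Finset.mem_filter.2 ⟨hp, h⟩))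
    have a2 : y₁ < p.1 → m < p.2 := fun h => hm2 _ (Finset.mem_image_of_mem _
      (Finset.mem_filter.2 ⟨hp, h⟩))
    rcases lt_trichotomy p.1 y₁ with h1 | h1 | h1
    · exact ⟨iff_of_true h1 (a1 h1), iff_of_false h1.asymm (a1 h1).asymm⟩
    · exact absurd h1 (hy p hp)
    · exact ⟨iff_of_false h1.asymm (a2 h1).asymm, iff_of_true h1 (a2 h1)⟩

/-- convexity of cells -/
theorem Near.convex {Z : Finset (R₁ × R₂)} {y y' c : R₁} {y₂ : R₂} (h : Near Z y y₂)
    (h' : Near Z y' y₂) (h1 : y ≤ c) (h2 : c ≤ y') : Near Z c y₂ := by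
  intro p hp
  obtain ⟨a1, a2⟩ := h p hp
  obtain ⟨b1, b2⟩ := h' p hp
  refine ⟨⟨fun e => b1.1 (e.trans_le h2), fun e => (a1.2 e).trans_le h1⟩,
    ⟨fun e => a2.1 (h1.trans_lt e), fun e => h2.trans_lt (b2.2 e)⟩⟩

theorem exists_root_up (i₁ : PolyIVT R₁) (i₂ : PolyIVT R₂) {Z : Finset (R₁ × R₂)}
    (hI : Iso Z) (f₁ : R₁[X]) (f₂ : R₂[X])
    (hZ : ∀ p ∈ Z, SignType.sign (f₁.eval p.1) = SignType.sign (f₂.eval p.2))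
    (hd : 0 < f₂.natDegree) {y₁ : R₁} {y₂ : R₂} (hy : Near Z y₁ y₂)
    (hd₁ : ∀ y, Near Z y y₂ → 0 < f₁.derivative.eval y)
    (hd₂ : ∀ y, Near Z y₁ y → 0 < f₂.derivative.eval y)
    (h₁ : 0 ≤ f₁.eval y₁) (h₂ : f₂.eval y₂ < 0) :
    ∃ y, y₂ < y ∧ Near Z y₁ y ∧ f₂.eval y = 0 := by
  have hne : ∀ p ∈ Z, p.1 ≠ y₁ := by
    intro p hp e
    have e2 := hy.eq hp e
    have := hZ p hp
    rw [e, e2, sign_neg h₂] at this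
    have := sign_eq_neg_one_iff.1 this
    linarith
  suffices ∃ M, y₂ < M ∧ 0 < f₂.eval M ∧ ∀ p ∈ Z, y₁ < p.1 → M ≤ p.2 by
    obtain ⟨M, hM1, hM2, hM3⟩ := this
    obtain ⟨c, hc1, hc2, hc3⟩ := i₂ f₂ y₂ M hM1 (mul_neg_of_neg_of_pos h₂ hM2)
    refine ⟨c, hc1, fun p hp => ?_, hc3⟩
    obtain ⟨a1, a2⟩ := hy p hp
    rcases lt_trichotomy p.1 y₁ with h | h | h
    · have h' := (a1.1 h).trans hc1
      exact ⟨iff_of_true h h', iff_of_false h.asymm h'.asymm⟩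
    · exact absurd h (hne p hp)
    · have h' := hc2.trans_le (hM3 p hp h)
      exact ⟨iff_of_false h.asymm h'.asymm, iff_of_true h h'⟩
  by_cases hex : ∃ p ∈ Z, y₁ < p.1
  · classical
    obtain ⟨p, hp, hmin⟩ := Finset.exists_min_image (Z.filter (fun p => y₁ < p.1)) Prod.snd
      (by obtain ⟨p, hp, h⟩ := hex; exact ⟨p, Finset.mem_filter.2 ⟨hp, h⟩⟩)
    rw [Finset.mem_filter] at hp
    obtain ⟨hp, hp1⟩ := hp
    have hp2 := (hy p hp).2.1 hp1
    refine ⟨p.2, hp2, ?_, fun q hq hq1 => hmin q (Finset.mem_filter.2 ⟨hq, hq1⟩)⟩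
    have : 0 < f₁.eval p.1 := by
      refine h₁.trans_lt (mono_of_deriv_pos i₁ f₁ y₁ p.1 hp1 fun c hc1 hc2 => hd₁ c ?_)
      intro q hq
      obtain ⟨a1, a2⟩ := hy q hq
      rcases lt_trichotomy q.1 y₁ with h | h | h
      · have h' := a1.1 h
        have h2 := h.trans hc1
        exact ⟨iff_of_true h2 h', iff_of_false h2.asymm h'.asymm⟩
      · exact absurd h (hne q hq)
      · have h' := a2.1 h
        have h2 : c < q.1 := by
          by_contra hcon
          push Not at hcon
          have h3 := hmin q (Finset.mem_filter.2 ⟨hq, h⟩)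
          exact absurd ((hI q hq p hp).1 (hcon.trans_lt hc2)) (not_lt.2 h3)
        exact ⟨iff_of_false h2.asymm h'.asymm, iff_of_true h2 h'⟩
    rwa [← sign_eq_one_iff, ← hZ p hp, sign_eq_one_iff]
  · push Not at hex
    obtain ⟨M, hM1, hM2⟩ := exists_pos_above f₂ hd y₂ (fun c hc => hd₂ c (by
      intro p hp
      obtain ⟨a1, a2⟩ := hy p hp
      have h := lt_of_le_of_ne (hex p hp) (hne p hp)
      have h' := (a1.1 h).trans hc
      exact ⟨iff_of_true h h', iff_of_false h.asymm h'.asymm⟩))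
    exact ⟨M, hM1, hM2, fun p hp h => absurd h (not_lt.2 (hex p hp))⟩

theorem exists_root_down (i₁ : PolyIVT R₁) (i₂ : PolyIVT R₂) {Z : Finset (R₁ × R₂)}
    (hI : Iso Z) (f₁ : R₁[X]) (f₂ : R₂[X])
    (hZ : ∀ p ∈ Z, SignType.sign (f₁.eval p.1) = SignType.sign (f₂.eval p.2))
    (hd : 0 < f₂.natDegree) {y₁ : R₁} {y₂ : R₂} (hy : Near Z y₁ y₂)
    (hd₁ : ∀ y, Near Z y y₂ → 0 < f₁.derivative.eval y)
    (hd₂ : ∀ y, Near Z y₁ y → 0 < f₂.derivative.eval y)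
    (h₁ : f₁.eval y₁ ≤ 0) (h₂ : 0 < f₂.eval y₂) :
    ∃ y, y < y₂ ∧ Near Z y₁ y ∧ f₂.eval y = 0 := by
  have hne : ∀ p ∈ Z, p.1 ≠ y₁ := by
    intro p hp e
    have e2 := hy.eq hp e
    have := hZ p hp
    rw [e, e2, sign_pos h₂] at this
    have := sign_eq_one_iff.1 this
    linarith
  suffices ∃ M, M < y₂ ∧ f₂.eval M < 0 ∧ ∀ p ∈ Z, p.1 < y₁ → p.2 ≤ M by
    obtain ⟨M, hM1, hM2, hM3⟩ := this
    obtain ⟨c, hc1, hc2, hc3⟩ := i₂ f₂ M y₂ hM1 (mul_neg_of_neg_of_pos hM2 h₂)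
    refine ⟨c, hc2, fun p hp => ?_, hc3⟩
    obtain ⟨a1, a2⟩ := hy p hp
    rcases lt_trichotomy p.1 y₁ with h | h | h
    · have h' := (hM3 p hp h).trans_lt hc1
      exact ⟨iff_of_true h h', iff_of_false h.asymm h'.asymm⟩
    · exact absurd h (hne p hp)
    · have h' := hc2.trans (a2.1 h)
      exact ⟨iff_of_false h.asymm h'.asymm, iff_of_true h h'⟩
  by_cases hex : ∃ p ∈ Z, p.1 < y₁
  · classical
    obtain ⟨p, hp, hmin⟩ := Finset.exists_max_image (Z.filter (fun p => p.1 < y₁)) Prod.snd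
      (by obtain ⟨p, hp, h⟩ := hex; exact ⟨p, Finset.mem_filter.2 ⟨hp, h⟩⟩)
    rw [Finset.mem_filter] at hp
    obtain ⟨hp, hp1⟩ := hp
    have hp2 := (hy p hp).1.1 hp1
    refine ⟨p.2, hp2, ?_, fun q hq hq1 => hmin q (Finset.mem_filter.2 ⟨hq, hq1⟩)⟩
    have : f₁.eval p.1 < 0 := by
      refine (mono_of_deriv_pos i₁ f₁ p.1 y₁ hp1 fun c hc1 hc2 => hd₁ c ?_).trans_le h₁
      intro q hq
      obtain ⟨a1, a2⟩ := hy q hq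
      rcases lt_trichotomy q.1 y₁ with h | h | h
      · have h' := a1.1 h
        have h2 : q.1 < c := by
          by_contra hcon
          push Not at hcon
          have h3 := hmin q (Finset.mem_filter.2 ⟨hq, h⟩)
          exact absurd ((hI p hp q hq).1 (hc1.trans_le hcon)) (not_lt.2 h3)
        exact ⟨iff_of_true h2 h', iff_of_false h2.asymm h'.asymm⟩
      · exact absurd h (hne q hq)
      · have h' := a2.1 h
        have h2 := hc2.trans h
        exact ⟨iff_of_false h2.asymm h'.asymm, iff_of_true h2 h'⟩
    rwa [← sign_eq_neg_one_iff, ← hZ p hp, sign_eq_neg_one_iff]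
  · push Not at hex
    obtain ⟨M, hM1, hM2⟩ := exists_neg_below f₂ hd y₂ (fun c hc => hd₂ c (by
      intro p hp
      obtain ⟨a1, a2⟩ := hy p hp
      have h := lt_of_le_of_ne (hex p hp) (hne p hp).symm
      have h' := hc.trans (a2.1 h)
      exact ⟨iff_of_false h.asymm h'.asymm, iff_of_true h h'⟩))
    exact ⟨M, hM1, hM2, fun p hp h => absurd h (not_lt.2 (hex p hp))⟩

/-- a polynomial with matching signs vanishes only at `Z` unless it is zero -/
theorem mem_of_deriv_zero {Z : Finset (R₁ × R₂)} (hI : Iso Z) (g₁ : R₁[X]) (g₂ : R₂[X])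
    (hg0 : g₁ ≠ 0)
    (hg : ∀ y₁ y₂, Near Z y₁ y₂ → SignType.sign (g₁.eval y₁) = SignType.sign (g₂.eval y₂))
    (y₁ : R₁) (h : g₁.eval y₁ = 0) : ∃ p ∈ Z, p.1 = y₁ := by
  classical
  by_contra hne
  push Not at hne
  obtain ⟨y₂, hy⟩ := hI.across y₁
  obtain ⟨m, hm1, hm2⟩ := Order.exists_between_finsets {y₁}
      ((Z.filter (fun p => y₁ < p.1)).image Prod.fst) (by
        intro x hx y hy
        simp only [Finset.mem_image, Finset.mem_filter, Finset.mem_singleton] at hx hy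
        obtain ⟨q, ⟨hq, hq1⟩, rfl⟩ := hy
        subst hx
        exact hq1)
  have hm1 := hm1 y₁ (by simp)
  apply hg0
  apply Polynomial.eq_zero_of_infinite_isRoot
  apply (Set.Ioo_infinite hm1).mono
  intro c hc
  have hcn : Near Z c y₂ := by
    intro p hp
    obtain ⟨a1, a2⟩ := hy p hp
    rcases lt_trichotomy p.1 y₁ with h | h | h
    · have h' := a1.1 h
      have h2 := h.trans hc.1
      exact ⟨iff_of_true h2 h', iff_of_false h2.asymm h'.asymm⟩
    · exact absurd h (hne p hp)
    · have h' := a2.1 h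
      have h2 := hc.2.trans (hm2 p.1 (Finset.mem_image_of_mem _ (Finset.mem_filter.2 ⟨hp, h⟩)))
      exact ⟨iff_of_false h2.asymm h'.asymm, iff_of_true h2 h'⟩
  have e1 := hg _ _ hcn
  rw [← hg _ _ hy, h, sign_zero, sign_eq_zero_iff] at e1
  exact e1

/-- uniqueness of roots in a cell -/
theorem root_unique (i₁ : PolyIVT R₁) {Z : Finset (R₁ × R₂)} (hI : Iso Z) (f₁ : R₁[X]) (f₂ : R₂[X])
    (hd : 0 < f₁.natDegree)
    (hder : ∀ y₁ y₂, Near Z y₁ y₂ →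
      SignType.sign (f₁.derivative.eval y₁) = SignType.sign (f₂.derivative.eval y₂))
    (y y' : R₁) (y₂ : R₂) (h : Near Z y y₂) (h' : Near Z y' y₂) (e : f₁.eval y = 0)
    (e' : f₁.eval y' = 0) : ¬ y < y' := by
  intro hlt
  have hf : f₁ ≠ 0 := by rintro rfl; simp at hd
  have hf' : f₁.derivative ≠ 0 := by
    intro h0
    have := derivative_eq_zero.1 h0
    omega
  obtain ⟨c, hc1, hc2, hc3⟩ := rolle i₁ f₁ hf y y' hlt e e'
  obtain ⟨p, hp, rfl⟩ := mem_of_deriv_zero hI _ _ hf' hder c hc3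
  have := (h' p hp).1.1 hc2
  have := (h p hp).1.2 this
  exact absurd this hc1.asymm

/-- The two facts about cells on which the derivative is positive. -/
theorem cell_pos (i₁ : PolyIVT R₁) (i₂ : PolyIVT R₂) {Z : Finset (R₁ × R₂)}
    (hI : Iso Z) (f₁ : R₁[X]) (f₂ : R₂[X])
    (hZ : ∀ p ∈ Z, SignType.sign (f₁.eval p.1) = SignType.sign (f₂.eval p.2))
    (hd1 : 0 < f₁.natDegree) (hd2 : 0 < f₂.natDegree)
    (hder : ∀ y₁ y₂, Near Z y₁ y₂ →
      SignType.sign (f₁.derivative.eval y₁) = SignType.sign (f₂.derivative.eval y₂))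
    (y₁ : R₁) (y₂ : R₂) (hy : Near Z y₁ y₂) (hpos : 0 < f₁.derivative.eval y₁) :
    (f₁.eval y₁ = 0 → ∃ y, Near Z y₁ y ∧ f₂.eval y = 0) ∧
    (SignType.sign (f₁.eval y₁) ≠ SignType.sign (f₂.eval y₂) → f₁.eval y₁ ≠ 0 → f₂.eval y₂ ≠ 0 →
      ∃ z₁ z₂, Near Z z₁ z₂ ∧ f₁.eval z₁ = 0 ∧ f₂.eval z₂ = 0 ∧ ¬ (z₁ < y₁ ↔ z₂ < y₂)) := by
  have b2 : ∀ y, Near Z y₁ y → 0 < f₂.derivative.eval y := by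
    intro y h
    rwa [← sign_eq_one_iff, ← hder _ _ h, sign_eq_one_iff]
  have b1 : ∀ y, Near Z y y₂ → 0 < f₁.derivative.eval y := by
    intro y h
    rw [← sign_eq_one_iff, hder _ _ h, sign_eq_one_iff]
    exact b2 _ hy
  have hZ' : ∀ p ∈ sw Z, SignType.sign (f₂.eval p.1) = SignType.sign (f₁.eval p.2) :=
    fun p hp => (hZ _ (mem_sw.1 hp)).symm
  have tr : ∀ z₁ z₂, Near Z z₁ y₂ → Near Z y₁ z₂ → Near Z z₁ z₂ := by
    intro z₁ z₂ h1 h2 p hp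
    obtain ⟨a1, a2⟩ := h1 p hp
    obtain ⟨c1, c2⟩ := h2 p hp
    obtain ⟨d1, d2⟩ := hy p hp
    exact ⟨by rw [a1, ← d1, c1], by rw [a2, ← d2, c2]⟩
  constructor
  · intro h0
    rcases lt_trichotomy (f₂.eval y₂) 0 with h | h | h
    · obtain ⟨y, -, h1, h2⟩ := exists_root_up i₁ i₂ hI f₁ f₂ hZ hd2 hy b1 b2 h0.ge h
      exact ⟨y, h1, h2⟩
    · exact ⟨y₂, hy, h⟩
    · obtain ⟨y, -, h1, h2⟩ := exists_root_down i₁ i₂ hI f₁ f₂ hZ hd2 hy b1 b2 h0.le h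
      exact ⟨y, h1, h2⟩
  · intro hs n1 n2
    rcases lt_or_gt_of_ne n1 with h1 | h1 <;> rcases lt_or_gt_of_ne n2 with h2 | h2
    · rw [sign_neg h1, sign_neg h2] at hs; exact absurd rfl hs
    · obtain ⟨z₂, c1, c2, c3⟩ := exists_root_down i₁ i₂ hI f₁ f₂ hZ hd2 hy b1 b2 h1.le h2
      obtain ⟨z₁, d1, d2, d3⟩ := exists_root_up i₂ i₁ hI.sw f₂ f₁ hZ' hd1 (near_sw.2 hy)
        (fun y h => b2 y (near_sw.1 h)) (fun y h => b1 y (near_sw.1 h)) h2.le h1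
      exact ⟨z₁, z₂, tr _ _ (near_sw.1 d2) c2, d3, c3, fun h => d1.asymm (h.2 c1)⟩
    · obtain ⟨z₂, c1, c2, c3⟩ := exists_root_up i₁ i₂ hI f₁ f₂ hZ hd2 hy b1 b2 h1.le h2
      obtain ⟨z₁, d1, d2, d3⟩ := exists_root_down i₂ i₁ hI.sw f₂ f₁ hZ' hd1 (near_sw.2 hy)
        (fun y h => b2 y (near_sw.1 h)) (fun y h => b1 y (near_sw.1 h)) h2.le h1
      exact ⟨z₁, z₂, tr _ _ (near_sw.1 d2) c2, d3, c3, fun h => c1.asymm (h.1 d1)⟩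
    · rw [sign_pos h1, sign_pos h2] at hs; exact absurd rfl hs

theorem cell_all (i₁ : PolyIVT R₁) (i₂ : PolyIVT R₂) {Z : Finset (R₁ × R₂)}
    (hI : Iso Z) (f₁ : R₁[X]) (f₂ : R₂[X])
    (hZ : ∀ p ∈ Z, SignType.sign (f₁.eval p.1) = SignType.sign (f₂.eval p.2))
    (hd1 : 0 < f₁.natDegree) (hd2 : 0 < f₂.natDegree)
    (hder : ∀ y₁ y₂, Near Z y₁ y₂ →
      SignType.sign (f₁.derivative.eval y₁) = SignType.sign (f₂.derivative.eval y₂))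
    (y₁ : R₁) (y₂ : R₂) (hy : Near Z y₁ y₂) :
    (f₁.eval y₁ = 0 → ∃ y, Near Z y₁ y ∧ f₂.eval y = 0) ∧
    (SignType.sign (f₁.eval y₁) ≠ SignType.sign (f₂.eval y₂) → f₁.eval y₁ ≠ 0 → f₂.eval y₂ ≠ 0 →
      ∃ z₁ z₂, Near Z z₁ z₂ ∧ f₁.eval z₁ = 0 ∧ f₂.eval z₂ = 0 ∧ ¬ (z₁ < y₁ ↔ z₂ < y₂)) := by
  have hf' : f₁.derivative ≠ 0 := by
    intro h0
    have := derivative_eq_zero.1 h0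
    omega
  rcases lt_trichotomy (f₁.derivative.eval y₁) 0 with h | h | h
  · have := cell_pos i₁ i₂ hI (-f₁) (-f₂)
      (fun p hp => by simp only [eval_neg, Left.sign_neg, hZ p hp]) (by simpa using hd1)
      (by simpa using hd2)
      (fun a b hab => by simp only [derivative_neg, eval_neg, Left.sign_neg, hder a b hab])
      y₁ y₂ hy (by simpa using h)
    simpa [Left.sign_neg] using this
  · obtain ⟨p, hp, rfl⟩ := mem_of_deriv_zero hI _ _ hf' hder y₁ h
    have e := hy.eq hp rfl
    subst e
    constructor
    · intro h0
      refine ⟨p.2, hy, ?_⟩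
      rw [← sign_eq_zero_iff, ← hZ p hp, h0, sign_zero]
    · intro hs
      exact absurd (hZ p hp) hs
  · exact cell_pos i₁ i₂ hI f₁ f₂ hZ hd1 hd2 hder y₁ y₂ hy h

/-- Adding one polynomial to a sign table. -/
theorem add_poly (i₁ : PolyIVT R₁) (i₂ : PolyIVT R₂) {Z : Finset (R₁ × R₂)}
    (hI : Iso Z) (f₁ : R₁[X]) (f₂ : R₂[X])
    (hZ : ∀ p ∈ Z, SignType.sign (f₁.eval p.1) = SignType.sign (f₂.eval p.2))
    (hd1 : 0 < f₁.natDegree) (hd2 : 0 < f₂.natDegree)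
    (hder : ∀ y₁ y₂, Near Z y₁ y₂ →
      SignType.sign (f₁.derivative.eval y₁) = SignType.sign (f₂.derivative.eval y₂)) :
    ∃ Z' : Finset (R₁ × R₂), Z ⊆ Z' ∧ Iso Z' ∧
      (∀ p ∈ Z', p ∈ Z ∨ (f₁.eval p.1 = 0 ∧ f₂.eval p.2 = 0)) ∧
      ∀ y₁ y₂, Near Z' y₁ y₂ → SignType.sign (f₁.eval y₁) = SignType.sign (f₂.eval y₂) := by
  classical
  have hf1 : f₁ ≠ 0 := by rintro rfl; simp at hd1
  have hf2 : f₂ ≠ 0 := by rintro rfl; simp at hd2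
  set W : Finset (R₁ × R₂) :=
    (f₁.roots.toFinset ×ˢ f₂.roots.toFinset).filter (fun p => Near Z p.1 p.2) with hW
  have memW : ∀ p, p ∈ W ↔ (f₁.eval p.1 = 0 ∧ f₂.eval p.2 = 0) ∧ Near Z p.1 p.2 := by
    intro p
    simp [hW, Finset.mem_product, mem_roots hf1, mem_roots hf2]
  have hder' : ∀ y₂ y₁, Near (sw Z) y₂ y₁ →
      SignType.sign (f₂.derivative.eval y₂) = SignType.sign (f₁.derivative.eval y₁) :=
    fun a b h => (hder b a (near_sw.1 h)).symm
  have hZ' : ∀ p ∈ sw Z, SignType.sign (f₂.eval p.1) = SignType.sign (f₁.eval p.2) :=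
    fun p hp => (hZ _ (mem_sw.1 hp)).symm
  have u1 := root_unique i₁ hI f₁ f₂ hd1 hder
  have u2 := root_unique i₂ hI.sw f₂ f₁ hd2 hder'
  have hWW : ∀ p ∈ W, ∀ q ∈ W, p.1 < q.1 → p.2 < q.2 := by
    intro p hp q hq hlt
    rw [memW] at hp hq
    by_contra hcon
    push Not at hcon
    -- p and q lie in the same cell
    have : Near Z q.1 p.2 := by
      intro r hr
      obtain ⟨a1, a2⟩ := hp.2 r hr
      obtain ⟨b1, b2⟩ := hq.2 r hr
      refine ⟨⟨fun h => (b1.1 h).trans_le hcon, fun h => (a1.2 h).trans hlt⟩,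
        ⟨fun h => a2.1 (hlt.trans h), fun h => b2.2 (hcon.trans_lt h)⟩⟩
    exact u1 p.1 q.1 p.2 hp.2 this hp.1.1 hq.1.1 hlt
  have hWW' : ∀ p ∈ W, ∀ q ∈ W, p.2 < q.2 → p.1 < q.1 := by
    intro p hp q hq hlt
    by_contra hcon
    push Not at hcon
    rw [memW] at hp hq
    have : Near Z p.1 q.2 := by
      intro r hr
      obtain ⟨a1, a2⟩ := hp.2 r hr
      obtain ⟨b1, b2⟩ := hq.2 r hr
      refine ⟨⟨fun h => (a1.1 h).trans hlt, fun h => (b1.2 h).trans_le hcon⟩,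
        ⟨fun h => b2.1 (hcon.trans_lt h), fun h => a2.2 (hlt.trans h)⟩⟩
    exact u2 p.2 q.2 p.1 (near_sw.2 hp.2) (near_sw.2 this) hp.1.2 hq.1.2 hlt
  refine ⟨Z ∪ W, Finset.subset_union_left, ?_, ?_, ?_⟩
  · intro p hp q hq
    rw [Finset.mem_union] at hp hq
    rcases hp with hp | hp <;> rcases hq with hq | hq
    · exact hI p hp q hq
    · exact (((memW q).1 hq).2 p hp).1
    · exact (((memW p).1 hp).2 q hq).2
    · exact ⟨hWW p hp q hq, hWW' p hp q hq⟩
  · intro p hp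
    rw [Finset.mem_union, memW] at hp
    exact hp.imp id And.left
  · intro y₁ y₂ hy
    have hyZ : Near Z y₁ y₂ := fun p hp => hy p (Finset.mem_union_left _ hp)
    by_cases h1 : f₁.eval y₁ = 0
    · obtain ⟨y, e1, e2⟩ := (cell_all i₁ i₂ hI f₁ f₂ hZ hd1 hd2 hder y₁ y₂ hyZ).1 h1
      have hm : (y₁, y) ∈ Z ∪ W := Finset.mem_union_right _ ((memW _).2 ⟨⟨h1, e2⟩, e1⟩)
      have := hy.eq hm rfl
      simp only at this
      rw [← this, e2, h1]
      simp
    by_cases h2 : f₂.eval y₂ = 0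
    · obtain ⟨y, e1, e2⟩ := (cell_all i₂ i₁ hI.sw f₂ f₁ hZ' hd2 hd1 hder' y₂ y₁
        (near_sw.2 hyZ)).1 h2
      have hm : (y, y₂) ∈ Z ∪ W :=
        Finset.mem_union_right _ ((memW _).2 ⟨⟨e2, h2⟩, near_sw.1 e1⟩)
      have := (near_sw.2 hy).eq (p := (y₂, y)) (mem_sw.2 hm) rfl
      simp only at this
      rw [← this, e2, h2]
      simp
    by_contra hs
    obtain ⟨z₁, z₂, c1, c2, c3, c4⟩ :=
      (cell_all i₁ i₂ hI f₁ f₂ hZ hd1 hd2 hder y₁ y₂ hyZ).2 hs h1 h2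
    exact c4 (hy (z₁, z₂) (Finset.mem_union_right _ ((memW _).2 ⟨⟨c2, c3⟩, c1⟩))).1

end Match

set_option linter.unusedSectionVars false
section Closure

/-- Closure of a finite set under finitely-valued operations decreasing a rank. -/
theorem exists_closure {α : Type} [DecidableEq α] (N : α → ℕ) (op : α → α → Finset α)
    (hop : ∀ p q, ∀ x ∈ op p q, N x < N p ∧ N x < N q) (F : Finset α) :
    ∃ C : Finset α, F ⊆ C ∧ ∀ p ∈ C, ∀ q ∈ C, op p q ⊆ C := by
  let step : Finset α → Finset α := fun G => G ∪ (G ×ˢ G).biUnion (fun p => op p.1 p.2)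
  let S : ℕ → Finset α := fun j => step^[j] F
  have hS : ∀ j, S (j + 1) = step (S j) := fun j => Function.iterate_succ_apply' step j F
  have memS : ∀ j x, x ∈ S (j + 1) ↔ x ∈ S j ∨ ∃ p ∈ S j, ∃ q ∈ S j, x ∈ op p q := by
    intro j x
    rw [hS]
    simp only [step, Finset.mem_union, Finset.mem_biUnion, Finset.mem_product, Prod.exists]
    constructor
    · rintro (h | ⟨a, b, ⟨h1, h2⟩, h3⟩)
      · exact Or.inl h
      · exact Or.inr ⟨a, h1, b, h2, h3⟩
    · rintro (h | ⟨a, h1, b, h2, h3⟩)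
      · exact Or.inl h
      · exact Or.inr ⟨a, b, ⟨h1, h2⟩, h3⟩
  have hF : ∀ j, F ⊆ S j := by
    intro j
    induction j with
    | zero => exact fun x hx => hx
    | succ j ih => exact fun x hx => (memS j x).2 (Or.inl (ih hx))
  set d := F.sup N with hd
  have key : ∀ j, ∀ x ∈ S (j + 1), x ∈ S j ∨ N x + (j + 1) ≤ d := by
    intro j
    induction j with
    | zero =>
      intro x hx
      rcases (memS 0 x).1 hx with h | ⟨p, hp, q, hq, h⟩
      · exact Or.inl h
      · right
        have h1 := (hop p q x h).1
        have h2 : N p ≤ d := Finset.le_sup (f := N) (show p ∈ F from hp)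
        omega
    | succ j ih =>
      intro x hx
      rcases (memS (j + 1) x).1 hx with h | ⟨p, hp, q, hq, h⟩
      · exact Or.inl h
      · have h1 := hop p q x h
        rcases ih p hp with hp' | hp'
        · rcases ih q hq with hq' | hq'
          · exact Or.inl ((memS j x).2 (Or.inr ⟨p, hp', q, hq', h⟩))
          · right; omega
        · right; omega
  refine ⟨S d, hF d, fun p hp q hq x hx => ?_⟩
  rcases key d x ((memS d x).2 (Or.inr ⟨p, hp, q, hq, hx⟩)) with h | h
  · exact h
  · omega

variable {A : Type} [CommRing A] [IsDomain A]

theorem exists_prem (p q : A[X]) (hq : q ≠ 0) :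
    ∃ (r s : A[X]) (e : ℕ), C (q.leadingCoeff) ^ e * p = q * s + r ∧ r.degree < q.degree := by
  induction hn : p.degree using WellFoundedLT.induction generalizing p with
  | _ n ih =>
    by_cases hlt : p.degree < q.degree
    · exact ⟨p, 0, 0, by simp, hlt⟩
    · push Not at hlt
      have hp : p ≠ 0 := by
        rintro rfl
        rw [degree_zero, le_bot_iff, degree_eq_bot] at hlt
        exact hq hlt
      have hlq : q.leadingCoeff ≠ 0 := leadingCoeff_ne_zero.2 hq
      have hlp : p.leadingCoeff ≠ 0 := leadingCoeff_ne_zero.2 hp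
      set k := p.natDegree - q.natDegree with hk
      have hdn : q.natDegree ≤ p.natDegree := natDegree_le_natDegree hlt
      have hlt' : (C q.leadingCoeff * p - C p.leadingCoeff * X ^ k * q).degree
          < (C q.leadingCoeff * p).degree := by
        apply degree_sub_lt_left
        · rw [degree_C_mul hlq, degree_mul, degree_C_mul_X_pow _ hlp, degree_eq_natDegree hp,
            degree_eq_natDegree hq]
          norm_cast
          omega
        · exact mul_ne_zero (by simpa using hlq) hp
        · simp only [leadingCoeff_mul, leadingCoeff_C, leadingCoeff_X_pow, mul_one]
          ring
      rw [degree_C_mul hlq] at hlt'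
      obtain ⟨r, s, e, h1, h2⟩ := ih _ (hn ▸ hlt') _ rfl
      refine ⟨r, s + C q.leadingCoeff ^ e * (C p.leadingCoeff * X ^ k), e + 1, ?_, h2⟩
      rw [mul_sub] at h1
      have : C q.leadingCoeff ^ (e + 1) * p = C q.leadingCoeff ^ e * (C q.leadingCoeff * p) := by
        ring
      rw [this]
      linear_combination h1

open Classical in
/-- pseudo-remainder -/
def prem (p q : A[X]) : A[X] := if hq : q ≠ 0 then (exists_prem p q hq).choose else 0

theorem prem_spec (p q : A[X]) (hq : q ≠ 0) :
    ∃ (s : A[X]) (e : ℕ), C (q.leadingCoeff) ^ e * p = q * s + prem p q := by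
  rw [prem, dif_pos hq]
  obtain ⟨s, e, h1, h2⟩ := (exists_prem p q hq).choose_spec
  exact ⟨s, e, h1⟩

theorem prem_degree (p q : A[X]) (hq : q ≠ 0) : (prem p q).degree < q.degree := by
  rw [prem, dif_pos hq]
  obtain ⟨s, e, h1, h2⟩ := (exists_prem p q hq).choose_spec
  exact h2

open Classical in
/-- rank -/
def rk (p : A[X]) : ℕ := if p = 0 then 0 else p.natDegree + 1

theorem rk_lt {p q : A[X]} (h : p.degree < q.degree) : rk p < rk q := by
  have hq : q ≠ 0 := by rintro rfl; simp at h
  unfold rk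
  rw [if_neg hq]
  split_ifs with hp
  · omega
  · have := natDegree_lt_natDegree hp h
    omega

theorem degree_le_of_rk {p q : A[X]} (h : rk p ≤ rk q) : p.degree ≤ q.degree := by
  by_contra hcon
  push Not at hcon
  exact absurd (rk_lt hcon) (not_lt.2 h)

/-- closed sets of polynomials -/
def ClosedSet (D : Finset A[X]) : Prop :=
  (∀ p ∈ D, p ≠ 0 → p.derivative ∈ D) ∧ (∀ p ∈ D, p ≠ 0 → p.eraseLead ∈ D) ∧
    ∀ p ∈ D, ∀ q ∈ D, q ≠ 0 → rk q ≤ rk p → prem p q ∈ D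

theorem exists_closedSet (F : Finset A[X]) : ∃ D : Finset A[X], F ⊆ D ∧ ClosedSet D := by
  classical
  obtain ⟨D, h1, h2⟩ := exists_closure (rk (A := A)) (fun p q =>
    Finset.filter (fun x => rk x < rk p ∧ rk x < rk q)
      (insert p.derivative (insert p.eraseLead {prem p q}) : Finset A[X])) (fun p q x hx => (Finset.mem_filter.1 hx).2) F
  refine ⟨D, h1, fun p hp h0 => ?_, fun p hp h0 => ?_, fun p hp q hq h0 hr => ?_⟩
  · apply h2 p hp p hp
    have := rk_lt (degree_derivative_lt h0)
    simp [this]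
  · apply h2 p hp p hp
    have := rk_lt (degree_eraseLead_lt h0)
    simp [this]
  · apply h2 p hp q hq
    have := rk_lt (prem_degree p q h0)
    simp [this, this.trans_le hr]

variable {R₁ R₂ : Type} [Field R₁] [LinearOrder R₁] [IsStrictOrderedRing R₁]
  [Field R₂] [LinearOrder R₂] [IsStrictOrderedRing R₂]

theorem eval_prem {R : Type} [Field R] (φ : A →+* R) (p q s : A[X]) (e : ℕ)
    (h : C (q.leadingCoeff) ^ e * p = q * s + prem p q) (y : R) (hy : (q.map φ).eval y = 0) :
    φ q.leadingCoeff ^ e * (p.map φ).eval y = ((prem p q).map φ).eval y := by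
  have := congrArg (fun f => (Polynomial.map φ f).eval y) h
  simpa [hy] using this

theorem map_eraseLead {R : Type} [Field R] (φ : A →+* R) (p : A[X])
    (h : φ p.leadingCoeff = 0) : p.map φ = p.eraseLead.map φ := by
  have := congrArg (Polynomial.map φ) (eraseLead_add_C_mul_X_pow p)
  rw [Polynomial.map_add, Polynomial.map_mul, Polynomial.map_C, h] at this
  rw [← this]
  simp

theorem match_aux (i₁ : PolyIVT R₁) (i₂ : PolyIVT R₂) (φ₁ : A →+* R₁) (φ₂ : A →+* R₂)
    (D : Finset A[X]) (hD : ClosedSet D)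
    (hs : ∀ p ∈ D, SignType.sign (φ₁ p.leadingCoeff) = SignType.sign (φ₂ p.leadingCoeff))
    (E : Finset A[X]) : E ⊆ D → (∀ p ∈ E, ∀ x ∈ D, rk x < rk p → x ∈ E) →
    ∃ Z : Finset (R₁ × R₂), Iso Z ∧
      (∀ p ∈ Z, ∃ q ∈ E, φ₁ q.leadingCoeff ≠ 0 ∧ (q.map φ₁).eval p.1 = 0 ∧
        (q.map φ₂).eval p.2 = 0) ∧
      ∀ y₁ y₂, Near Z y₁ y₂ → ∀ p ∈ E,
        SignType.sign ((p.map φ₁).eval y₁) = SignType.sign ((p.map φ₂).eval y₂) := by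
  classical
  induction E using Finset.induction_on_max_value (rk (A := A)) with
  | empty =>
    intro _ _
    exact ⟨∅, by simp [Iso], by simp, by simp⟩
  | insert f E hf hmax ih =>
    intro hED hdown
    have hfD : f ∈ D := hED (Finset.mem_insert_self _ _)
    have hED' : E ⊆ D := fun x hx => hED (Finset.mem_insert_of_mem hx)
    have low : ∀ x ∈ D, rk x < rk f → x ∈ E := fun x hx hlt =>
      Finset.mem_of_mem_insert_of_ne (hdown f (Finset.mem_insert_self _ _) x hx hlt)
        (by rintro rfl; exact lt_irrefl _ hlt)
    obtain ⟨Z, hI, hroot, hsign⟩ := ih hED' (fun p hp x hx hlt =>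
      low x hx (hlt.trans_le (hmax p hp)))
    -- reduction: it is enough to keep `Z`
    have keep : (∀ y₁ y₂, Near Z y₁ y₂ →
        SignType.sign ((f.map φ₁).eval y₁) = SignType.sign ((f.map φ₂).eval y₂)) →
        ∃ Z : Finset (R₁ × R₂), Iso Z ∧
      (∀ p ∈ Z, ∃ q ∈ insert f E, φ₁ q.leadingCoeff ≠ 0 ∧ (q.map φ₁).eval p.1 = 0 ∧
        (q.map φ₂).eval p.2 = 0) ∧
      ∀ y₁ y₂, Near Z y₁ y₂ → ∀ p ∈ insert f E,
        SignType.sign ((p.map φ₁).eval y₁) = SignType.sign ((p.map φ₂).eval y₂) := by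
      intro h
      refine ⟨Z, hI, fun p hp => ?_, fun y₁ y₂ hy p hp => ?_⟩
      · obtain ⟨q, hq, h⟩ := hroot p hp
        exact ⟨q, Finset.mem_insert_of_mem hq, h⟩
      · rcases Finset.mem_insert.1 hp with rfl | hp
        · exact h _ _ hy
        · exact hsign _ _ hy p hp
    by_cases hf0 : f = 0
    · apply keep
      intro y₁ y₂ _
      simp [hf0]
    by_cases hl1 : φ₁ f.leadingCoeff = 0
    · have hl2 : φ₂ f.leadingCoeff = 0 := by
        rw [← sign_eq_zero_iff, ← hs f hfD, hl1, sign_zero]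
      apply keep
      intro y₁ y₂ hy
      rw [map_eraseLead φ₁ f hl1, map_eraseLead φ₂ f hl2]
      exact hsign _ _ hy _ (low _ (hD.2.1 f hfD hf0) (rk_lt (degree_eraseLead_lt hf0)))
    have hl2 : φ₂ f.leadingCoeff ≠ 0 := by
      rw [Ne, ← sign_eq_zero_iff, ← hs f hfD, sign_eq_zero_iff]
      exact hl1
    have hd1 := natDegree_map_of_leadingCoeff_ne_zero φ₁ hl1
    have hd2 := natDegree_map_of_leadingCoeff_ne_zero φ₂ hl2
    rcases Nat.eq_zero_or_pos f.natDegree with hd | hd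
    · apply keep
      intro y₁ y₂ _
      have := hs f hfD
      rw [leadingCoeff, hd] at this
      rw [eq_C_of_natDegree_eq_zero hd]
      simpa using this
    have hZ : ∀ p ∈ Z, SignType.sign ((f.map φ₁).eval p.1) =
        SignType.sign ((f.map φ₂).eval p.2) := by
      intro p hp
      obtain ⟨q, hq, hql, hq1, hq2⟩ := hroot p hp
      have hq0 : q ≠ 0 := by rintro rfl; simp at hql
      obtain ⟨s, e, hse⟩ := prem_spec f q hq0
      have e1 := eval_prem φ₁ f q s e hse _ hq1
      have e2 := eval_prem φ₂ f q s e hse _ hq2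
      have hr : prem f q ∈ E := low _ (hD.2.2 f hfD q (hED' hq) hq0 (hmax q hq))
        ((rk_lt (prem_degree f q hq0)).trans_le (hmax q hq))
      have e3 := hsign _ _ (hI.near hp) _ hr
      rw [← e1, ← e2, sign_mul, sign_mul, sign_pow, sign_pow, ← hs q (hED' hq)] at e3
      exact mul_left_cancel₀ (pow_ne_zero _ (by simpa [sign_eq_zero_iff] using hql)) e3
    obtain ⟨Z', hsub, hI', hr', hs'⟩ := add_poly i₁ i₂ hI (f.map φ₁) (f.map φ₂) hZ
      (by omega) (by omega) (by
        intro y₁ y₂ hy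
        rw [derivative_map, derivative_map]
        exact hsign _ _ hy _ (low _ (hD.1 f hfD hf0) (rk_lt (degree_derivative_lt hf0))))
    refine ⟨Z', hI', fun p hp => ?_, fun y₁ y₂ hy p hp => ?_⟩
    · rcases hr' p hp with h | h
      · obtain ⟨q, hq, h⟩ := hroot p h
        exact ⟨q, Finset.mem_insert_of_mem hq, h⟩
      · exact ⟨f, Finset.mem_insert_self _ _, hl1, h.1, h.2⟩
    · rcases Finset.mem_insert.1 hp with rfl | hp
      · exact hs' _ _ hy
      · exact hsign _ _ (fun r hr => hy r (hsub hr)) p hp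

/-- One variable transfer -/
theorem transfer_one (i₁ : PolyIVT R₁) (i₂ : PolyIVT R₂) (F : Finset A[X]) :
    ∃ G : Finset A, ∀ (φ₁ : A →+* R₁) (φ₂ : A →+* R₂),
      (∀ a ∈ G, SignType.sign (φ₁ a) = SignType.sign (φ₂ a)) →
      ∀ y₁ : R₁, ∃ y₂ : R₂, ∀ p ∈ F,
        SignType.sign ((p.map φ₁).eval y₁) = SignType.sign ((p.map φ₂).eval y₂) := by
  classical
  obtain ⟨D, hF, hD⟩ := exists_closedSet F
  refine ⟨D.image leadingCoeff, fun φ₁ φ₂ h y₁ => ?_⟩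
  obtain ⟨Z, hI, -, hs⟩ := match_aux i₁ i₂ φ₁ φ₂ D hD
    (fun p hp => h _ (Finset.mem_image_of_mem _ hp)) D (fun x hx => hx) (fun _ _ x hx _ => hx)
  obtain ⟨y₂, hy⟩ := hI.across y₁
  exact ⟨y₂, fun p hp => hs _ _ hy p (hF hp)⟩

/-- Tarski transfer for existential sign conditions. -/
theorem transfer (i₁ : PolyIVT R₁) (i₂ : PolyIVT R₂) (n : ℕ) (F : Finset (MvPolynomial (Fin n) A)) :
    ∃ G : Finset A, ∀ (φ₁ : A →+* R₁) (φ₂ : A →+* R₂),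
      (∀ a ∈ G, SignType.sign (φ₁ a) = SignType.sign (φ₂ a)) →
      ∀ x₁ : Fin n → R₁, ∃ x₂ : Fin n → R₂, ∀ p ∈ F,
        SignType.sign (MvPolynomial.eval₂ φ₁ x₁ p) = SignType.sign (MvPolynomial.eval₂ φ₂ x₂ p) := by
  classical
  induction n with
  | zero =>
    refine ⟨F.image (MvPolynomial.coeff 0), fun φ₁ φ₂ h x₁ => ⟨fun i => i.elim0, fun p hp => ?_⟩⟩
    have := h _ (Finset.mem_image_of_mem _ hp)
    rw [MvPolynomial.eq_C_of_isEmpty p]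
    simpa using this
  | succ n ih =>
    obtain ⟨G', hG'⟩ := transfer_one (A := MvPolynomial (Fin n) A) i₁ i₂
      (F.image (MvPolynomial.finSuccEquiv A n))
    obtain ⟨G, hG⟩ := ih G'
    refine ⟨G, fun φ₁ φ₂ h x₁ => ?_⟩
    obtain ⟨x', hx'⟩ := hG φ₁ φ₂ h (Fin.tail x₁)
    obtain ⟨y, hy⟩ := hG' (MvPolynomial.eval₂Hom φ₁ (Fin.tail x₁)) (MvPolynomial.eval₂Hom φ₂ x')
      hx' (x₁ 0)
    have key : ∀ {R : Type} [Field R] (φ : A →+* R) (z : R) (w : Fin n → R)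
        (p : MvPolynomial (Fin (n + 1)) A),
        (((MvPolynomial.finSuccEquiv A n p).map (MvPolynomial.eval₂Hom φ w)).eval z) =
          MvPolynomial.eval₂ φ (Fin.cons z w : Fin (n + 1) → R) p := by
      intro R _ φ z w p
      rw [eval_map]
      induction p using MvPolynomial.induction_on with
      | C a => simp [MvPolynomial.finSuccEquiv_apply]
      | add p q hp hq => simp [hp, hq]
      | mul_X p i hp =>
        rw [map_mul, Polynomial.eval₂_mul, hp, MvPolynomial.eval₂_mul]
        congr 1
        refine Fin.cases ?_ (fun i => ?_) i
        · simp [MvPolynomial.finSuccEquiv_X_zero]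
        · simp [MvPolynomial.finSuccEquiv_X_succ]
    refine ⟨Fin.cons y x', fun p hp => ?_⟩
    have := hy _ (Finset.mem_image_of_mem _ hp)
    rw [key, key] at this
    rwa [Fin.cons_self_tail] at this

end Closure

section Hensel

open Topology

/-- coefficients of `X^r + Σ u_j X^j` -/
def mc (r : ℕ) (u : Fin r → ℝ) (k : ℕ) : ℝ :=
  if h : k < r then u ⟨k, h⟩ else if k = r then 1 else 0

/-- coefficients of `Σ u_j X^j` -/
def lc (r : ℕ) (u : Fin r → ℝ) (k : ℕ) : ℝ := if h : k < r then u ⟨k, h⟩ else 0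

/-- the polynomial `Σ u_j X^j` -/
def lp (r : ℕ) (u : Fin r → ℝ) : ℝ[X] := ∑ k ∈ Finset.range r, C (lc r u k) * X ^ k

theorem lp_coeff (r : ℕ) (u : Fin r → ℝ) (k : ℕ) : (lp r u).coeff k = lc r u k := by
  rw [lp, finsetSum_coeff]
  simp only [coeff_C_mul_X_pow]
  rw [Finset.sum_ite_eq]
  split_ifs with h
  · rfl
  · rw [Finset.mem_range] at h
    rw [lc, dif_neg h]

theorem lp_degree (r : ℕ) (u : Fin r → ℝ) : (lp r u).degree < r := by
  rw [degree_lt_iff_coeff_zero]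
  intro m hm
  rw [lp_coeff, lc, dif_neg (not_lt.2 hm)]

theorem lp_eq_zero {r : ℕ} {u : Fin r → ℝ} (h : lp r u = 0) : u = 0 := by
  ext j
  have := lp_coeff r u j
  rw [h, lc, dif_pos j.2] at this
  simpa using this.symm

theorem mc_add (r : ℕ) (u δ : Fin r → ℝ) (t : ℝ) (k : ℕ) :
    mc r (u + t • δ) k = mc r u k + t * lc r δ k := by
  unfold mc lc
  split_ifs <;> simp

theorem mc_coeff {r : ℕ} (g : ℝ[X]) (hg : g.Monic) (hr : g.natDegree = r) (k : ℕ) :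
    mc r (fun j => g.coeff j) k = g.coeff k := by
  subst hr
  unfold mc
  split_ifs with h1 h2
  · rfl
  · rw [h2]; exact hg.symm
  · exact (coeff_eq_zero_of_natDegree_lt (by omega)).symm

/-- the multiplication map on coefficients -/
def Phi (r s : ℕ) (w : (Fin r → ℝ) × (Fin s → ℝ)) (i : Fin (r + s)) : ℝ :=
  ∑ kl ∈ Finset.HasAntidiagonal.antidiagonal (i : ℕ), mc r w.1 kl.1 * mc s w.2 kl.2

theorem contDiff_mc (r : ℕ) (k : ℕ) : ContDiff ℝ ⊤ (fun u => mc r u k) := by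
  unfold mc
  split_ifs <;> fun_prop

theorem contDiff_Phi (r s : ℕ) : ContDiff ℝ ⊤ (Phi r s) := by
  rw [contDiff_pi]
  intro i
  unfold Phi
  apply ContDiff.sum
  intro kl _
  exact ((contDiff_mc r kl.1).comp contDiff_fst).mul ((contDiff_mc s kl.2).comp contDiff_snd)

theorem Phi_deriv (r s : ℕ) (w δ : (Fin r → ℝ) × (Fin s → ℝ)) (i : Fin (r + s)) :
    (fderiv ℝ (Phi r s) w δ) i = ∑ kl ∈ Finset.HasAntidiagonal.antidiagonal (i : ℕ),
      (lc r δ.1 kl.1 * mc s w.2 kl.2 + mc r w.1 kl.1 * lc s δ.2 kl.2) := by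
  have h1 : HasFDerivAt (Phi r s) (fderiv ℝ (Phi r s) w) (w + (0 : ℝ) • δ) := by
    rw [zero_smul, add_zero]
    exact ((contDiff_Phi r s).differentiable (by simp)).differentiableAt.hasFDerivAt
  have h2 : HasDerivAt (fun t : ℝ => w + t • δ) δ 0 := by
    simpa using ((hasDerivAt_id (0 : ℝ)).smul_const δ).const_add w
  have h3 := h1.comp_hasDerivAt (0 : ℝ) h2
  have h4 := (hasDerivAt_pi.1 h3) i
  refine h4.unique ?_
  have : (fun t : ℝ => (Phi r s ∘ fun t : ℝ => w + t • δ) t i) = fun t =>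
      ∑ kl ∈ Finset.HasAntidiagonal.antidiagonal (i : ℕ), (mc r w.1 kl.1 + t * lc r δ.1 kl.1) *
        (mc s w.2 kl.2 + t * lc s δ.2 kl.2) := by
    funext t
    simp only [Function.comp, Phi]
    refine Finset.sum_congr rfl fun kl _ => ?_
    rw [Prod.fst_add, Prod.snd_add, Prod.smul_fst, Prod.smul_snd, mc_add, mc_add]
  rw [this]
  apply HasDerivAt.fun_sum
  intro kl _
  have e1 : ∀ a b : ℝ, HasDerivAt (fun t : ℝ => a + t * b) b 0 := fun a b => by
    simpa using ((hasDerivAt_id (0 : ℝ)).mul_const b).const_add a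
  simpa using (e1 (mc r w.1 kl.1) (lc r δ.1 kl.1)).fun_mul (e1 (mc s w.2 kl.2) (lc s δ.2 kl.2))

theorem Phi_deriv_inj {r s : ℕ} (g h : ℝ[X]) (hg : g.Monic) (hh : h.Monic) (hc : IsCoprime g h)
    (hr : g.natDegree = r) (hs : h.natDegree = s)
    (δ : (Fin r → ℝ) × (Fin s → ℝ))
    (hδ : fderiv ℝ (Phi r s)
      (fun j => g.coeff j, fun j => h.coeff j) δ = 0) : δ = 0 := by
  have d1 := lp_degree r δ.1
  have d2 := lp_degree s δ.2
  have dg : g.degree = r := by rw [degree_eq_natDegree hg.ne_zero, hr]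
  have dh : h.degree = s := by rw [degree_eq_natDegree hh.ne_zero, hs]
  have hz : lp r δ.1 * h + g * lp s δ.2 = 0 := by
    ext i
    rw [coeff_zero]
    by_cases hi : i < r + s
    · have := congrFun hδ ⟨i, hi⟩
      rw [Phi_deriv] at this
      rw [coeff_add, coeff_mul, coeff_mul, ← Finset.sum_add_distrib]
      simp only [lp_coeff]
      simpa [mc_coeff g hg hr, mc_coeff h hh hs] using this
    · have hlt : (lp r δ.1 * h + g * lp s δ.2).degree < (r + s : ℕ) := by
        refine lt_of_le_of_lt (degree_add_le _ _) (max_lt ?_ ?_)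
        · rw [degree_mul, dh, Nat.cast_add]
          exact WithBot.add_lt_add_right (by simp) d1
        · rw [degree_mul, dg, Nat.cast_add]
          exact WithBot.add_lt_add_left (by simp) d2
      exact coeff_eq_zero_of_degree_lt (hlt.trans_le (by exact_mod_cast not_lt.1 hi))
  have e1 : lp r δ.1 = 0 := by
    refine eq_zero_of_dvd_of_degree_lt (p := g) ?_ (by rw [dg]; exact d1)
    refine hc.dvd_of_dvd_mul_right (z := h) ?_
    exact ⟨- lp s δ.2, by linear_combination hz⟩
  have e2 : lp s δ.2 = 0 := by
    refine eq_zero_of_dvd_of_degree_lt (p := h) ?_ (by rw [dh]; exact d2)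
    refine hc.symm.dvd_of_dvd_mul_left (y := g) ?_
    exact ⟨- lp r δ.1, by linear_combination hz⟩
  exact Prod.ext (lp_eq_zero e1) (lp_eq_zero e2)

theorem hensel {r s : ℕ} (g h : ℝ[X]) (hg : g.Monic) (hh : h.Monic) (hc : IsCoprime g h)
    (hr : g.natDegree = r) (hs : h.natDegree = s)
    (γ : ℕ → ℝ → ℝ) (hγ : ∀ i, AnalyticAt ℝ (γ i) 0)
    (hγ0 : ∀ i < r + s, γ i 0 = (g * h).coeff i) :
    ∃ a b : ℕ → ℝ → ℝ, (∀ k, AnalyticAt ℝ (a k) 0) ∧ (∀ k, AnalyticAt ℝ (b k) 0) ∧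
      a r = 1 ∧ b s = 1 ∧ (∀ k, r < k → a k = 0) ∧
      (∀ k, s < k → b k = 0) ∧
      ∀ i < r + s, ∀ᶠ τ in 𝓝 (0 : ℝ),
        ∑ kl ∈ Finset.HasAntidiagonal.antidiagonal i, a kl.1 τ * b kl.2 τ = γ i τ := by
  set w : (Fin r → ℝ) × (Fin s → ℝ) := (fun j => g.coeff j, fun j => h.coeff j) with hw
  let L := LinearMap.linearEquivOfInjective
    ((fderiv ℝ (Phi r s) w : ((Fin r → ℝ) × (Fin s → ℝ)) →L[ℝ] (Fin (r + s) → ℝ)) :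
      ((Fin r → ℝ) × (Fin s → ℝ)) →ₗ[ℝ] (Fin (r + s) → ℝ))
    ((injective_iff_map_eq_zero _).2 fun δ hδ => Phi_deriv_inj g h hg hh hc hr hs δ hδ) (by simp)
  let L' := L.toContinuousLinearEquiv
  have hcd : ContDiffAt ℝ ⊤ (Phi r s) w := (contDiff_Phi r s).contDiffAt
  have hf' : HasFDerivAt (Phi r s)
      (L' : ((Fin r → ℝ) × (Fin s → ℝ)) →L[ℝ] (Fin (r + s) → ℝ)) w := by
    have := ((contDiff_Phi r s).differentiable (by simp)).differentiableAt (x := w) |>.hasFDerivAt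
    have e : (L' : ((Fin r → ℝ) × (Fin s → ℝ)) →L[ℝ] (Fin (r + s) → ℝ)) =
        fderiv ℝ (Phi r s) w := ContinuousLinearMap.ext fun x => rfl
    rw [e]
    exact this
  have hn : (⊤ : WithTop ℕ∞) ≠ 0 := by simp
  let Ψ := hcd.localInverse hf' hn
  have hΨ : AnalyticAt ℝ Ψ (Phi r s w) :=
    (hcd.to_localInverse hf' hn).analyticAt
  have hΨr : ∀ᶠ y in 𝓝 (Phi r s w), Phi r s (Ψ y) = y :=
    (hcd.hasStrictFDerivAt' hf' hn).eventually_right_inverse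
  let Γ : ℝ → (Fin (r + s) → ℝ) := fun τ i => γ i τ
  have hΓ : AnalyticAt ℝ Γ 0 := by
    rw [analyticAt_pi_iff]
    exact fun i => hγ i
  have hΓ0 : Γ 0 = Phi r s w := by
    funext i
    show γ i 0 = _
    rw [hγ0 i i.2, coeff_mul]
    simp only [Phi, hw, mc_coeff g hg hr, mc_coeff h hh hs]
  have hcomp : AnalyticAt ℝ (fun τ => Ψ (Γ τ)) 0 := AnalyticAt.comp (by rw [hΓ0]; exact hΨ) hΓ
  refine ⟨fun k τ => mc r (Ψ (Γ τ)).1 k, fun k τ => mc s (Ψ (Γ τ)).2 k, fun k => ?_, fun k => ?_,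
    ?_, ?_, fun k hk => ?_, fun k hk => ?_, fun i hi => ?_⟩
  · exact AnalyticAt.comp (g := fun u => mc r u k) (f := fun τ => (Ψ (Γ τ)).1)
      (contDiff_mc r k).contDiffAt.analyticAt (analyticAt_fst.comp hcomp)
  · exact AnalyticAt.comp (g := fun u => mc s u k) (f := fun τ => (Ψ (Γ τ)).2)
      (contDiff_mc s k).contDiffAt.analyticAt (analyticAt_snd.comp hcomp)
  · funext τ; simp [mc]
  · funext τ; simp [mc]
  · funext τ
    simp only [mc]
    rw [dif_neg (by omega), if_neg (by omega)]; rfl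
  · funext τ
    simp only [mc]
    rw [dif_neg (by omega), if_neg (by omega)]; rfl
  · have hcont : Tendsto Γ (𝓝 0) (𝓝 (Phi r s w)) := hΓ0 ▸ hΓ.continuousAt
    filter_upwards [hcont.eventually hΨr] with τ hτ
    exact congrFun hτ ⟨i, hi⟩

end Hensel

section Puiseux

open Topology

/-- an ultrafilter finer than the punctured right neighbourhood filter of `0` -/
def UU : Ultrafilter ℝ := Ultrafilter.of (𝓝[>] (0 : ℝ))

theorem UU_le : (UU : Filter ℝ) ≤ 𝓝[>] (0 : ℝ) := Ultrafilter.of_le _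

/-- germs -/
abbrev Gm : Type := Filter.Germ (UU : Filter ℝ) ℝ

/-- the germ of `t ↦ h (t ^ (1/N))` -/
def rho (N : ℕ) : (ℝ → ℝ) →+* Gm :=
  (Filter.Germ.coeRingHom (UU : Filter ℝ)).comp
    (RingHom.pi fun t : ℝ => Pi.evalRingHom (fun _ : ℝ => ℝ) (t ^ ((N : ℝ)⁻¹)))

theorem rho_apply (N : ℕ) (h : ℝ → ℝ) :
    rho N h = ((fun t : ℝ => h (t ^ ((N : ℝ)⁻¹)) : ℝ → ℝ) : Gm) := rfl

theorem tendsto_root {N : ℕ} (hN : N ≠ 0) :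
    Tendsto (fun t : ℝ => t ^ ((N : ℝ)⁻¹)) (𝓝[>] 0) (𝓝[>] 0) := by
  have hN' : (0 : ℝ) < (N : ℝ)⁻¹ := by positivity
  rw [tendsto_nhdsWithin_iff]
  constructor
  · have h1 : ContinuousAt (fun t : ℝ => t ^ ((N : ℝ)⁻¹)) 0 :=
      Real.continuousAt_rpow_const _ _ (Or.inr hN'.le)
    have h2 := h1.tendsto
    simp only [Real.zero_rpow hN'.ne'] at h2
    exact h2.mono_left nhdsWithin_le_nhds
  · filter_upwards [self_mem_nhdsWithin] with t ht
    exact Real.rpow_pos_of_pos ht _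

theorem eventually_root {N : ℕ} (hN : N ≠ 0) {p : ℝ → Prop} (hp : ∀ᶠ τ in 𝓝[>] (0 : ℝ), p τ) :
    ∀ᶠ t in (UU : Filter ℝ), p (t ^ ((N : ℝ)⁻¹)) :=
  ((tendsto_root hN).eventually hp).filter_mono UU_le

theorem rho_congr {N : ℕ} (hN : N ≠ 0) {h₁ h₂ : ℝ → ℝ}
    (h : ∀ᶠ τ in 𝓝[>] (0 : ℝ), h₁ τ = h₂ τ) : rho N h₁ = rho N h₂ := by
  rw [rho_apply, rho_apply, Filter.Germ.coe_eq]
  exact eventually_root hN h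

theorem rho_sign {N : ℕ} (hN : N ≠ 0) {h : ℝ → ℝ} {s : SignType}
    (hs : ∀ᶠ τ in 𝓝[>] (0 : ℝ), SignType.sign (h τ) = s) : SignType.sign (rho N h) = s := by
  have h1 := eventually_root hN hs
  have h0 : (0 : Gm) = ((fun _ => 0 : ℝ → ℝ) : Gm) := rfl
  cases s with
  | zero =>
    refine sign_eq_zero_iff.2 ?_
    rw [rho_apply, h0, Filter.Germ.coe_eq]
    filter_upwards [h1] with t ht using sign_eq_zero_iff.1 ht
  | neg =>
    refine sign_eq_neg_one_iff.2 ?_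
    rw [rho_apply, h0, Filter.Germ.coe_lt]
    filter_upwards [h1] with t ht using sign_eq_neg_one_iff.1 ht
  | pos =>
    refine sign_eq_one_iff.2 ?_
    rw [rho_apply, h0, Filter.Germ.coe_lt]
    filter_upwards [h1] with t ht using sign_eq_one_iff.1 ht

theorem rho_level {N M : ℕ} (hN : N ≠ 0) (hM : M ≠ 0) (h : ℝ → ℝ) :
    rho N h = rho (N * M) (fun τ => h (τ ^ M)) := by
  rw [rho_apply, rho_apply, Filter.Germ.coe_eq]
  have : ∀ᶠ t in (UU : Filter ℝ), 0 < t := UU_le self_mem_nhdsWithin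
  filter_upwards [this] with t ht
  congr 1
  rw [← Real.rpow_natCast, ← Real.rpow_mul ht.le]
  congr 1
  push_cast
  have : (N : ℝ) ≠ 0 := by exact_mod_cast hN
  have : (M : ℝ) ≠ 0 := by exact_mod_cast hM
  field_simp

theorem mer_pow {h : ℝ → ℝ} (hh : MeromorphicAt h 0) {M : ℕ} (hM : M ≠ 0) :
    MeromorphicAt (fun τ => h (τ ^ M)) 0 := by
  have : MeromorphicAt (h ∘ fun τ : ℝ => τ ^ M) 0 :=
    MeromorphicAt.comp_analyticAt (by simpa [hM] using hh) (by fun_prop)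
  exact this

theorem ana_pow {h : ℝ → ℝ} (hh : AnalyticAt ℝ h 0) {M : ℕ} (hM : M ≠ 0) :
    AnalyticAt ℝ (fun τ => h (τ ^ M)) 0 := by
  have : AnalyticAt ℝ (h ∘ fun τ : ℝ => τ ^ M) 0 :=
    AnalyticAt.comp (by simpa [hM] using hh) (by fun_prop)
  exact this

theorem mer_cases {h : ℝ → ℝ} (hh : MeromorphicAt h 0) :
    (∀ᶠ τ in 𝓝[>] (0 : ℝ), h τ = 0) ∨ ∃ (k : ℤ) (g : ℝ → ℝ), AnalyticAt ℝ g 0 ∧ g 0 ≠ 0 ∧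
      ∀ᶠ τ in 𝓝[>] (0 : ℝ), h τ = τ ^ k * g τ := by
  have hle : 𝓝[>] (0 : ℝ) ≤ 𝓝[≠] 0 := nhdsWithin_mono _ fun x hx => ne_of_gt hx
  rcases eq_or_ne (meromorphicOrderAt h 0) ⊤ with ht | ht
  · exact Or.inl ((meromorphicOrderAt_eq_top_iff.1 ht).filter_mono hle)
  · obtain ⟨k, hk⟩ := WithTop.ne_top_iff_exists.1 ht
    obtain ⟨g, h1, h2, h3⟩ := (meromorphicOrderAt_eq_int_iff hh).1 hk.symm
    refine Or.inr ⟨k, g, h1, h2, ?_⟩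
    filter_upwards [h3.filter_mono hle] with τ hτ
    simpa using hτ

theorem sign_ana {g : ℝ → ℝ} (hg : ContinuousAt g 0) (h0 : g 0 ≠ 0) :
    ∀ᶠ τ in 𝓝[>] (0 : ℝ), SignType.sign (g τ) = SignType.sign (g 0) := by
  have h2 : Tendsto g (𝓝[>] 0) (𝓝 (g 0)) := hg.tendsto.mono_left nhdsWithin_le_nhds
  rcases lt_or_gt_of_ne h0 with h | h
  · filter_upwards [h2.eventually (gt_mem_nhds h)] with τ hτ
    rw [sign_neg h, sign_neg hτ]
  · filter_upwards [h2.eventually (lt_mem_nhds h)] with τ hτ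
    rw [sign_pos h, sign_pos hτ]

theorem mer_sign {h : ℝ → ℝ} (hh : MeromorphicAt h 0) :
    ∃ s : SignType, ∀ᶠ τ in 𝓝[>] (0 : ℝ), SignType.sign (h τ) = s := by
  rcases mer_cases hh with h1 | ⟨k, g, h1, h2, h3⟩
  · exact ⟨0, h1.mono fun τ hτ => by rw [hτ, sign_zero]⟩
  · refine ⟨SignType.sign (g 0), ?_⟩
    filter_upwards [h3, sign_ana h1.continuousAt h2, self_mem_nhdsWithin] with τ h4 h5 h6
    have h6' : (0 : ℝ) < τ := h6
    rw [h4, sign_mul, sign_pos (zpow_pos h6' k), one_mul, h5]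

theorem mer_sign_eq {N : ℕ} (hN : N ≠ 0) {h : ℝ → ℝ} (hh : MeromorphicAt h 0) :
    ∀ᶠ τ in 𝓝[>] (0 : ℝ), SignType.sign (h τ) = SignType.sign (rho N h) := by
  obtain ⟨s, hs⟩ := mer_sign hh
  rw [rho_sign hN hs]
  exact hs

/-- Puiseux elements -/
def IsP (x : Gm) : Prop := ∃ (N : ℕ) (h : ℝ → ℝ), N ≠ 0 ∧ MeromorphicAt h 0 ∧ x = rho N h

/-- elements of level `N` -/
def IsL (N : ℕ) (x : Gm) : Prop := ∃ h : ℝ → ℝ, MeromorphicAt h 0 ∧ x = rho N h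

theorem IsL.lift {N M : ℕ} (hN : N ≠ 0) (hM : M ≠ 0) {x : Gm} (h : IsL N x) : IsL (N * M) x := by
  obtain ⟨h, h1, h2⟩ := h
  exact ⟨_, mer_pow h1 hM, h2.trans (rho_level hN hM h)⟩

theorem exists_level₂ {x y : Gm} (hx : IsP x) (hy : IsP y) : ∃ N, N ≠ 0 ∧ IsL N x ∧ IsL N y := by
  obtain ⟨N, h, hN, h1, h2⟩ := hx
  obtain ⟨M, k, hM, h3, h4⟩ := hy
  refine ⟨N * M, mul_ne_zero hN hM, IsL.lift hN hM ⟨h, h1, h2⟩, ?_⟩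
  rw [mul_comm]
  exact IsL.lift hM hN ⟨k, h3, h4⟩

theorem rho_inv (N : ℕ) (h : ℝ → ℝ) : (rho N h)⁻¹ = rho N h⁻¹ := by
  rw [rho_apply, rho_apply, ← Filter.Germ.coe_inv]
  rfl

/-- The field of (convergent) Puiseux series. -/
def PP : Subfield Gm where
  carrier := {x | IsP x}
  mul_mem' := by
    intro x y hx hy
    obtain ⟨N, hN, ⟨h, h1, rfl⟩, ⟨k, h3, rfl⟩⟩ := exists_level₂ hx hy
    exact ⟨N, h * k, hN, h1.mul h3, (map_mul _ _ _).symm⟩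
  one_mem' := ⟨1, 1, one_ne_zero, MeromorphicAt.const 1 0, (map_one _).symm⟩
  add_mem' := by
    intro x y hx hy
    obtain ⟨N, hN, ⟨h, h1, rfl⟩, ⟨k, h3, rfl⟩⟩ := exists_level₂ hx hy
    exact ⟨N, h + k, hN, h1.add h3, (map_add _ _ _).symm⟩
  zero_mem' := ⟨1, 0, one_ne_zero, MeromorphicAt.const 0 0, (map_zero _).symm⟩
  neg_mem' := by
    rintro x ⟨N, h, hN, h1, rfl⟩
    exact ⟨N, -h, hN, h1.neg, (map_neg _ _).symm⟩
  inv_mem' := by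
    rintro x ⟨N, h, hN, h1, rfl⟩
    exact ⟨N, h⁻¹, hN, h1.inv, rho_inv N h⟩

theorem exists_level {ι : Type} (s : Finset ι) (x : ι → PP) :
    ∃ N, N ≠ 0 ∧ ∀ i ∈ s, IsL N (x i) := by
  classical
  induction s using Finset.induction_on with
  | empty => exact ⟨1, one_ne_zero, by simp⟩
  | insert i s hi ih =>
    obtain ⟨N, hN, h⟩ := ih
    obtain ⟨M, k, hM, h3, h4⟩ := (x i).2
    refine ⟨N * M, mul_ne_zero hN hM, fun j hj => ?_⟩
    rcases Finset.mem_insert.1 hj with rfl | hj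
    · rw [mul_comm]
      exact IsL.lift hM hN ⟨k, h3, h4⟩
    · exact (h j hj).lift hN hM

/-- `x` is integral of level `N` with residue `r`. -/
def IsO (N : ℕ) (x : PP) (r : ℝ) : Prop :=
  ∃ g : ℝ → ℝ, AnalyticAt ℝ g 0 ∧ g 0 = r ∧ (x : Gm) = rho N g

theorem IsO.lift {N M : ℕ} (hN : N ≠ 0) (hM : M ≠ 0) {x : PP} {r : ℝ} (h : IsO N x r) :
    IsO (N * M) x r := by
  obtain ⟨g, h1, h2, h3⟩ := h
  exact ⟨_, ana_pow h1 hM, by simpa [hM] using h2, h3.trans (rho_level hN hM g)⟩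

theorem IsO.mul {N : ℕ} {x y : PP} {r s : ℝ} (hx : IsO N x r) (hy : IsO N y s) :
    IsO N (x * y) (r * s) := by
  obtain ⟨g, h1, h2, h3⟩ := hx
  obtain ⟨k, h4, h5, h6⟩ := hy
  exact ⟨g * k, h1.mul h4, by simp [h2, h5], by push_cast; rw [h3, h6, map_mul]⟩

theorem IsO.add {N : ℕ} {x y : PP} {r s : ℝ} (hx : IsO N x r) (hy : IsO N y s) :
    IsO N (x + y) (r + s) := by
  obtain ⟨g, h1, h2, h3⟩ := hx
  obtain ⟨k, h4, h5, h6⟩ := hy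
  exact ⟨g + k, h1.add h4, by simp [h2, h5], by push_cast; rw [h3, h6, map_add]⟩

theorem IsO.zero {N : ℕ} : IsO N 0 0 := ⟨0, analyticAt_const, rfl, by simp⟩

theorem IsO.one {N : ℕ} : IsO N 1 1 := ⟨1, analyticAt_const, rfl, by simp⟩

theorem IsO.pow {N : ℕ} {x : PP} {r : ℝ} (hx : IsO N x r) (k : ℕ) : IsO N (x ^ k) (r ^ k) := by
  induction k with
  | zero => simpa using IsO.one
  | succ k ih => rw [pow_succ, pow_succ]; exact ih.mul hx

theorem IsO.sum {N : ℕ} {ι : Type} (s : Finset ι) {x : ι → PP} {r : ι → ℝ}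
    (h : ∀ i ∈ s, IsO N (x i) (r i)) : IsO N (∑ i ∈ s, x i) (∑ i ∈ s, r i) := by
  classical
  induction s using Finset.induction_on with
  | empty => simpa using IsO.zero
  | insert i s hi ih =>
    rw [Finset.sum_insert hi, Finset.sum_insert hi]
    exact (h i (Finset.mem_insert_self _ _)).add
      (ih fun j hj => h j (Finset.mem_insert_of_mem hj))

theorem IsO.sign {N : ℕ} (hN : N ≠ 0) {x : PP} {r : ℝ} (hx : IsO N x r) (hr : r ≠ 0) :
    SignType.sign x = SignType.sign r := by
  obtain ⟨g, h1, h2, h3⟩ := hx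
  have : SignType.sign (x : Gm) = SignType.sign r := by
    rw [h3, ← h2]
    exact rho_sign hN (sign_ana h1.continuousAt (by rwa [h2]))
  rw [← this]
  rfl

theorem IsO.pos {N : ℕ} (hN : N ≠ 0) {x : PP} {r : ℝ} (hx : IsO N x r) (hr : 0 < r) : 0 < x := by
  have := hx.sign hN hr.ne'
  rwa [sign_pos hr, sign_eq_one_iff] at this

theorem IsO.inv {N : ℕ} {x : PP} {r : ℝ} (hx : IsO N x r) (hr : r ≠ 0) :
    IsO N x⁻¹ r⁻¹ := by
  obtain ⟨g, h1, h2, h3⟩ := hx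
  exact ⟨g⁻¹, h1.inv (by rwa [h2]), by simp [h2], by push_cast; rw [h3, rho_inv]⟩

theorem IsO.eval {N : ℕ} {F : PP[X]} {F₀ : ℝ[X]} (h : ∀ i, IsO N (F.coeff i) (F₀.coeff i))
    {x : PP} {r : ℝ} (hx : IsO N x r) : IsO N (F.eval x) (F₀.eval r) := by
  rw [eval_eq_sum_range' (n := F.natDegree + F₀.natDegree + 1) (by omega),
    eval_eq_sum_range' (n := F.natDegree + F₀.natDegree + 1) (by omega)]
  exact IsO.sum _ fun i _ => (h i).mul (hx.pow i)

/-- the uniformizer of level `N` -/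
def thG (N : ℕ) : Gm := rho N (fun τ => τ)

theorem thG_mem {N : ℕ} (hN : N ≠ 0) : thG N ∈ PP := ⟨N, _, hN, MeromorphicAt.id 0, rfl⟩

open Classical in
/-- the uniformizer of level `N` -/
def th (N : ℕ) : PP := if hN : N ≠ 0 then ⟨thG N, thG_mem hN⟩ else 1

theorem th_coe {N : ℕ} (hN : N ≠ 0) : (th N : Gm) = rho N (fun τ => τ) := by
  rw [th, dif_pos hN]; rfl

theorem th_pos {N : ℕ} (hN : N ≠ 0) : 0 < th N := by
  have : SignType.sign (th N : Gm) = 1 := by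
    rw [th_coe hN]
    apply rho_sign hN
    filter_upwards [self_mem_nhdsWithin] with τ hτ using sign_pos hτ
  exact sign_eq_one_iff.1 this

theorem th_isO {N : ℕ} (hN : N ≠ 0) : IsO N (th N) 0 := ⟨_, analyticAt_id, rfl, th_coe hN⟩

theorem th_level {N M : ℕ} (hN : N ≠ 0) (hM : M ≠ 0) : th N = th (N * M) ^ M := by
  apply Subtype.ext
  push_cast
  rw [th_coe hN, th_coe (mul_ne_zero hN hM), rho_level hN hM, ← map_pow]
  rfl

theorem rho_zpow {N : ℕ} (hN : N ≠ 0) (k : ℤ) (g : ℝ → ℝ) :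
    rho N (fun τ => τ ^ k * g τ) = (th N : Gm) ^ k * rho N g := by
  have : ∀ k : ℤ, rho N (fun τ => τ ^ k) = (th N : Gm) ^ k := by
    intro k
    rw [th_coe hN]
    cases k with
    | ofNat k =>
      simp only [Int.ofNat_eq_natCast, zpow_natCast]
      rw [← map_pow]; rfl
    | negSucc k =>
      simp only [zpow_negSucc]
      rw [← map_pow, rho_inv]; rfl
  rw [← this, ← map_mul]
  rfl

theorem IsL.cases {N : ℕ} (hN : N ≠ 0) {x : PP} (hx : IsL N x) :
    x = 0 ∨ ∃ (k : ℤ) (u : PP) (r : ℝ), r ≠ 0 ∧ IsO N u r ∧ x = th N ^ k * u := by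
  obtain ⟨h, h1, h2⟩ := hx
  rcases mer_cases h1 with h3 | ⟨k, g, h3, h4, h5⟩
  · left
    apply Subtype.ext
    rw [h2, rho_congr hN (h₂ := 0) h3, map_zero]; rfl
  · right
    refine ⟨k, ⟨rho N g, ⟨N, g, hN, h3.meromorphicAt, rfl⟩⟩, g 0, h4, ⟨g, h3, rfl, rfl⟩, ?_⟩
    apply Subtype.ext
    have e : ((th N ^ k : PP) : Gm) = (th N : Gm) ^ k := map_zpow₀ PP.subtype (th N) k
    push_cast
    rw [h2, rho_congr hN h5, rho_zpow hN, e]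

end Puiseux

section IVT

open Topology

theorem polyIVT_real : PolyIVT ℝ := by
  intro p a b hab h
  have hc : ContinuousOn (fun x => p.eval x) (Set.Icc a b) := p.continuous.continuousOn
  rcases mul_neg_iff.1 h with ⟨h1, h2⟩ | ⟨h1, h2⟩
  · obtain ⟨c, hc1, hc2⟩ := intermediate_value_Ioo' hab.le hc ⟨h2, h1⟩
    exact ⟨c, hc1.1, hc1.2, hc2⟩
  · obtain ⟨c, hc1, hc2⟩ := intermediate_value_Ioo hab.le hc ⟨h1, h2⟩
    exact ⟨c, hc1.1, hc1.2, hc2⟩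

/-- intermediate value property of a single polynomial -/
def HasIVT (f : PP[X]) : Prop := ∀ a b, a < b → f.eval a * f.eval b < 0 →
  ∃ c, a < c ∧ c < b ∧ f.eval c = 0

theorem HasIVT.mul {f g : PP[X]} (hf : HasIVT f) (hg : HasIVT g) : HasIVT (f * g) := by
  intro a b hab h
  rw [eval_mul, eval_mul] at h
  have h' : (f.eval a * f.eval b) * (g.eval a * g.eval b) < 0 := by
    calc _ = _ := by ring
      _ < 0 := h
  rcases mul_neg_iff.1 h' with ⟨_, h2⟩ | ⟨h1, _⟩
  · obtain ⟨c, h3, h4, h5⟩ := hg a b hab h2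
    exact ⟨c, h3, h4, by rw [eval_mul, h5, mul_zero]⟩
  · obtain ⟨c, h3, h4, h5⟩ := hf a b hab h1
    exact ⟨c, h3, h4, by rw [eval_mul, h5, zero_mul]⟩

theorem HasIVT.of_taylor {f : PP[X]} (s : PP) (hf : HasIVT (taylor s f)) : HasIVT f := by
  intro a b hab h
  obtain ⟨c, h3, h4, h5⟩ := hf (a - s) (b - s) (by linarith) (by
    simpa [taylor_eval] using h)
  refine ⟨c + s, by linarith, by linarith, ?_⟩
  rwa [taylor_eval] at h5

theorem eval_scaleRoots (f : PP[X]) (s x : PP) :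
    (scaleRoots f s).eval (s * x) = s ^ f.natDegree * f.eval x := by
  have := scaleRoots_eval₂_mul (p := f) (RingHom.id PP) x s
  simpa [eval₂_id] using this

theorem HasIVT.of_scale {f : PP[X]} {s : PP} (hs : 0 < s) (hf : HasIVT (scaleRoots f s)) :
    HasIVT f := by
  intro a b hab h
  obtain ⟨c, h3, h4, h5⟩ := hf (s * a) (s * b) (by gcongr) (by
    rw [eval_scaleRoots, eval_scaleRoots]
    have : s ^ f.natDegree * eval a f * (s ^ f.natDegree * eval b f) =
      (s ^ f.natDegree * s ^ f.natDegree) * (eval a f * eval b f) := by ring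
    rw [this]
    exact mul_neg_of_pos_of_neg (by positivity) h)
  refine ⟨s⁻¹ * c, ?_, ?_, ?_⟩
  · rwa [lt_inv_mul_iff₀ hs]
  · rwa [inv_mul_lt_iff₀ hs]
  · have h6 := eval_scaleRoots f s (s⁻¹ * c)
    rw [mul_inv_cancel_left₀ hs.ne', h5] at h6
    exact (mul_eq_zero.1 h6.symm).resolve_left (by positivity)

theorem hasIVT_X_pow (d : ℕ) : HasIVT (X ^ d) := by
  intro a b hab h
  simp only [eval_pow, eval_X] at h
  have h' : a * b < 0 := by
    by_contra hcon
    push Not at hcon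
    have := pow_nonneg hcon d
    rw [mul_pow] at this
    exact absurd h (not_lt.2 this)
  have hd : d ≠ 0 := by rintro rfl; simp at h; exact absurd h (by simp [zero_le_one])
  refine ⟨0, ?_, ?_, by simp [hd]⟩
  · rcases mul_neg_iff.1 h' with ⟨h1, h2⟩ | ⟨h1, h2⟩
    · exact absurd (h2.trans h1) (not_lt.2 hab.le)
    · exact h1
  · rcases mul_neg_iff.1 h' with ⟨h1, h2⟩ | ⟨h1, h2⟩
    · exact absurd (h2.trans h1) (not_lt.2 hab.le)
    · exact h2

theorem exists_poly {R : Type} [CommRing R] [Nontrivial R] (r : ℕ) (A : ℕ → R) (h1 : A r = 1)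
    (h0 : ∀ k, r < k → A k = 0) :
    ∃ G : R[X], G.Monic ∧ G.natDegree = r ∧ ∀ k, G.coeff k = A k := by
  set G : R[X] := ∑ k ∈ Finset.range (r + 1), C (A k) * X ^ k with hG
  have hc : ∀ k, G.coeff k = A k := by
    intro k
    rw [hG, finsetSum_coeff]
    simp only [coeff_C_mul_X_pow]
    rw [Finset.sum_ite_eq]
    split_ifs with h
    · rfl
    · rw [Finset.mem_range] at h
      exact (h0 k (by omega)).symm
  have hd : G.natDegree = r := by
    apply natDegree_eq_of_le_of_coeff_ne_zero
    · rw [natDegree_le_iff_coeff_eq_zero]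
      intro k hk
      rw [hc, h0 k hk]
    · rw [hc, h1]; exact one_ne_zero
  refine ⟨G, ?_, hd, hc⟩
  rw [Monic, leadingCoeff, hd, hc, h1]

theorem hensel_PP {N : ℕ} (hN : N ≠ 0) {r s : ℕ} (F : PP[X]) (g h : ℝ[X]) (hF : F.Monic)
    (hFd : F.natDegree = r + s) (hg : g.Monic) (hh : h.Monic) (hc : IsCoprime g h)
    (hr : g.natDegree = r) (hs : h.natDegree = s)
    (hO : ∀ i, IsO N (F.coeff i) ((g * h).coeff i)) :
    ∃ G H : PP[X], G.Monic ∧ H.Monic ∧ G.natDegree = r ∧ H.natDegree = s ∧ F = G * H := by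
  choose γ h1 h2 h3 using hO
  obtain ⟨a, b, ha, hb, ha1, hb1, ha0, hb0, hab⟩ := hensel g h hg hh hc hr hs γ h1 (fun i _ => h2 i)
  have mk : ∀ {q : ℝ → ℝ}, AnalyticAt ℝ q 0 → rho N q ∈ PP := fun hq =>
    ⟨N, _, hN, hq.meromorphicAt, rfl⟩
  obtain ⟨G, hG1, hG2, hG3⟩ := exists_poly r (fun k => (⟨rho N (a k), mk (ha k)⟩ : PP))
    (by apply Subtype.ext; simp [ha1]) (fun k hk => by apply Subtype.ext; simp [ha0 k hk])
  obtain ⟨H, hH1, hH2, hH3⟩ := exists_poly s (fun k => (⟨rho N (b k), mk (hb k)⟩ : PP))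
    (by apply Subtype.ext; simp [hb1]) (fun k hk => by apply Subtype.ext; simp [hb0 k hk])
  refine ⟨G, H, hG1, hH1, hG2, hH2, ?_⟩
  have hGH : (G * H).Monic := hG1.mul hH1
  have hGHd : (G * H).natDegree = r + s := by rw [hG1.natDegree_mul hH1, hG2, hH2]
  ext i
  rcases lt_trichotomy i (r + s) with hi | hi | hi
  · rw [coeff_mul, h3 i]
    have : ((∑ x ∈ Finset.HasAntidiagonal.antidiagonal i, G.coeff x.1 * H.coeff x.2 : PP) : Gm) =
        ∑ x ∈ Finset.HasAntidiagonal.antidiagonal i, rho N (a x.1) * rho N (b x.2) := by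
      simp only [hG3, hH3]
      push_cast
      rfl
    rw [this]
    simp only [← map_mul, ← map_sum]
    refine rho_congr hN ?_
    filter_upwards [(hab i hi).filter_mono nhdsWithin_le_nhds] with τ hτ
    rw [← hτ]
    simp
  · have e1 : F.coeff i = 1 := by rw [hi, ← hFd]; exact hF
    have e2 : (G * H).coeff i = 1 := by rw [hi, ← hGHd]; exact hGH
    rw [e1, e2]
  · rw [coeff_eq_zero_of_natDegree_lt (by omega), coeff_eq_zero_of_natDegree_lt (by omega)]

theorem real_noroot {F : ℝ[X]} (hF : F.Monic) (h : ∀ r, F.eval r ≠ 0) :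
    (∀ r, 0 < F.eval r) ∧ Even F.natDegree := by
  have pos : ∀ r, 0 < F.eval r := by
    intro r
    by_contra hcon
    have hneg : F.eval r < 0 := lt_of_le_of_ne (not_lt.1 hcon) (h r)
    obtain ⟨M, hM⟩ := eventually_pos F (by rw [hF.leadingCoeff]; exact one_pos)
    obtain ⟨c, -, -, hc⟩ := polyIVT_real F r (max M (r + 1))
      (lt_max_of_lt_right (by linarith)) (mul_neg_of_neg_of_pos hneg (hM _ (le_max_left _ _)))
    exact h c hc
  refine ⟨pos, ?_⟩
  by_contra hodd
  rw [Nat.not_even_iff_odd] at hodd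
  obtain ⟨M, hM⟩ := eventually_pos (-(F.comp (-X))) (by
    rw [leadingCoeff_neg, leadingCoeff_comp (by simp), hF.leadingCoeff]
    simp [hodd.neg_one_pow])
  have h1 := hM M le_rfl
  have h2 := pos (-M)
  simp at h1
  linarith

theorem PP_pos {N : ℕ} (hN : N ≠ 0) (F : PP[X]) (F₀ : ℝ[X]) (hF : F.Monic) (hF₀ : F₀.Monic)
    (hd : F.natDegree = F₀.natDegree) (hO : ∀ i, IsO N (F.coeff i) (F₀.coeff i))
    (h : ∀ r, F₀.eval r ≠ 0) (x : PP) : 0 < F.eval x := by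
  obtain ⟨hpos, heven⟩ := real_noroot hF₀ h
  obtain ⟨K, hK, hxK⟩ := exists_level {0} (fun _ : ℕ => x)
  have hx' := hxK 0 (by simp)
  have hL : IsL (N * K) x := by rw [mul_comm]; exact hx'.lift hK hN
  have hNK := mul_ne_zero hN hK
  have hO' : ∀ i, IsO (N * K) (F.coeff i) (F₀.coeff i) := fun i => (hO i).lift hN hK
  have good : ∀ r, IsO (N * K) x r → 0 < F.eval x := fun r hr =>
    (IsO.eval hO' hr).pos hNK (hpos r)
  rcases hL.cases hNK with h0 | ⟨k, u, r, hr, hu, hxu⟩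
  · exact good 0 (h0 ▸ IsO.zero)
  · rcases le_or_gt 0 k with hk | hk
    · obtain ⟨m, rfl⟩ := Int.eq_ofNat_of_zero_le hk
      refine good (0 ^ m * r) ?_
      rw [hxu, zpow_natCast]
      exact ((th_isO hNK).pow m).mul hu
    · obtain ⟨m, hm⟩ := Int.eq_ofNat_of_zero_le (show 0 ≤ -k by omega)
      have hx0 : x ≠ 0 := by
        rw [hxu]
        refine mul_ne_zero (zpow_ne_zero _ (th_pos hNK).ne') ?_
        have := hu.sign hNK hr
        intro hu0
        rw [hu0, sign_zero] at this
        exact hr (sign_eq_zero_iff.1 this.symm)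
      have hinv : IsO (N * K) x⁻¹ 0 := by
        have e : x⁻¹ = th (N * K) ^ m * u⁻¹ := by
          rw [hxu, mul_inv, ← zpow_neg, hm]
          simp
        have hm0 : m ≠ 0 := by rintro rfl; simp at hm; omega
        rw [e]
        have := ((th_isO hNK).pow m).mul (hu.inv hr)
        simpa [hm0] using this
      have hrev : ∀ i, IsO (N * K) (F.reverse.coeff i) (F₀.reverse.coeff i) := by
        intro i
        rw [coeff_reverse, coeff_reverse, hd]
        exact hO' _
      have h1 := (IsO.eval hrev hinv)
      rw [← coeff_zero_eq_eval_zero, coeff_zero_reverse, hF₀.leadingCoeff] at h1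
      have h2 := h1.pos hNK one_pos
      let _ := invertibleOfNonzero hx0
      have h3 := eval₂_reverse_mul_pow (RingHom.id PP) x F
      rw [eval₂_id, eval₂_id, invOf_eq_inv] at h3
      rw [← h3, hd]
      exact mul_pos h2 (heven.pow_pos hx0)

theorem ivt_norm {N : ℕ} (hN : N ≠ 0) {d i₀ : ℕ} (F : PP[X]) (F₀ : ℝ[X]) (hF : F.Monic)
    (hF₀ : F₀.Monic) (hd : F.natDegree = d) (hd₀ : F₀.natDegree = d)
    (hO : ∀ i, IsO N (F.coeff i) (F₀.coeff i))
    (hz : F₀.coeff (d - 1) = 0) (hi : i₀ < d) (hi₀ : F₀.coeff i₀ ≠ 0)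
    (ih : ∀ m < d, ∀ f : PP[X], f.Monic → f.natDegree = m → HasIVT f) : HasIVT F := by
  by_cases hroot : ∃ r, F₀.eval r = 0
  · obtain ⟨r, hr⟩ := hroot
    obtain ⟨h, h1, h2⟩ := exists_eq_pow_rootMultiplicity_mul_and_not_dvd F₀ hF₀.ne_zero r
    set m := rootMultiplicity r F₀ with hm
    have hm0 : 0 < m := (rootMultiplicity_pos hF₀.ne_zero).2 hr
    have hXm : ((X - C r) ^ m).Monic := (monic_X_sub_C r).pow m
    have hh : h.Monic := hXm.of_mul_monic_left (h1 ▸ hF₀)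
    have hXd : ((X - C r) ^ m).natDegree = m := by
      rw [natDegree_pow, natDegree_X_sub_C, mul_one]
    have hsum : d = m + h.natDegree := by
      rw [← hd₀, h1, hXm.natDegree_mul hh, hXd]
    have hcop : IsCoprime ((X - C r) ^ m) h :=
      IsCoprime.pow_left (((irreducible_X_sub_C r).coprime_iff_not_dvd).2 h2)
    have hh0 : h.natDegree ≠ 0 := by
      intro h0
      have hone : h = 1 := hh.natDegree_eq_zero.1 h0
      rw [hone, mul_one] at h1
      have hdm : d = m := by omega
      have hnext : F₀.nextCoeff = 0 := by
        rw [nextCoeff_of_natDegree_pos (by omega), hd₀, hz]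
      have hn2 : F₀.nextCoeff = m • (-r) := by
        rw [h1, (monic_X_sub_C r).nextCoeff_pow, nextCoeff_X_sub_C]
      have hr0 : r = 0 := by
        rw [hnext, nsmul_eq_mul] at hn2
        rcases mul_eq_zero.1 hn2.symm with h | h
        · exact absurd (by exact_mod_cast h) hm0.ne'
        · simpa using h
      rw [h1, hr0] at hi₀
      simp only [map_zero, sub_zero, coeff_X_pow] at hi₀
      rw [if_neg (by omega)] at hi₀
      exact hi₀ rfl
    obtain ⟨G, H, hG, hH, hGd, hHd, hFGH⟩ := hensel_PP hN F _ h hF (hd.trans hsum) hXm hh hcop hXd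
      rfl (h1 ▸ hO)
    rw [hFGH]
    exact (ih m (by omega) G hG hGd).mul (ih _ (by omega) H hH hHd)
  · push Not at hroot
    intro a b hab hlt
    have ha := PP_pos hN F F₀ hF hF₀ (hd.trans hd₀.symm) hO hroot a
    have hb := PP_pos hN F F₀ hF hF₀ (hd.trans hd₀.symm) hO hroot b
    exact absurd hlt (not_lt.2 (mul_pos ha hb).le)

theorem ivt_depressed {d : ℕ} (f : PP[X]) (hf : f.Monic) (hd : f.natDegree = d)
    (hz : f.coeff (d - 1) = 0) (hd0 : 0 < d) (hne : ∃ i < d, f.coeff i ≠ 0)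
    (ih : ∀ m < d, ∀ f : PP[X], f.Monic → f.natDegree = m → HasIVT f) : HasIVT f := by
  classical
  obtain ⟨N, hN, hL⟩ := exists_level (Finset.range d) (fun i => f.coeff i)
  have hk : ∀ i, ∃ k : ℤ, i < d → f.coeff i ≠ 0 → ∃ (u : PP) (r : ℝ), r ≠ 0 ∧ IsO N u r ∧
      f.coeff i = th N ^ k * u := by
    intro i
    by_cases hi : i < d
    · rcases (hL i (Finset.mem_range.2 hi)).cases hN with h | ⟨k, u, r, h1, h2, h3⟩
      · exact ⟨0, fun _ h' => absurd h h'⟩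
      · exact ⟨k, fun _ _ => ⟨u, r, h1, h2, h3⟩⟩
    · exact ⟨0, fun h => absurd h hi⟩
  choose k hk using hk
  let S := (Finset.range d).filter (fun i => f.coeff i ≠ 0)
  have hS : S.Nonempty := by
    obtain ⟨i, h1, h2⟩ := hne
    exact ⟨i, Finset.mem_filter.2 ⟨Finset.mem_range.2 h1, h2⟩⟩
  obtain ⟨i₀, hi₀, hmin⟩ := S.exists_min_image (fun i => (k i : ℚ) / ((d : ℚ) - i)) hS
  have hi₀d : i₀ < d := Finset.mem_range.1 (Finset.mem_filter.1 hi₀).1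
  have hi₀0 : f.coeff i₀ ≠ 0 := (Finset.mem_filter.1 hi₀).2
  set e := d - i₀ with he
  have he0 : e ≠ 0 := by omega
  have hM : N * e ≠ 0 := mul_ne_zero hN he0
  set M := N * e with hMdef
  have hθ := th_pos hM
  set σ : PP := th M ^ (- k i₀) with hσ
  have hσpos : 0 < σ := zpow_pos hθ _
  refine HasIVT.of_scale hσpos ?_
  have hcoef : ∀ i, ∃ r : ℝ, IsO M ((scaleRoots f σ).coeff i) r ∧ (i = d → r = 1) ∧
      (d < i → r = 0) ∧ (i = d - 1 → r = 0) ∧ (i = i₀ → r ≠ 0) := by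
    intro i
    rw [coeff_scaleRoots, hd]
    rcases lt_trichotomy i d with hi | hi | hi
    · by_cases hc : f.coeff i = 0
      · refine ⟨0, by rw [hc, zero_mul]; exact IsO.zero, by omega, by omega, fun _ => rfl, ?_⟩
        rintro rfl
        exact absurd hc hi₀0
      · obtain ⟨u, r, hr, hu, hcu⟩ := hk i hi hc
        have hle := hmin i (Finset.mem_filter.2 ⟨Finset.mem_range.2 hi, hc⟩)
        have hle' : k i₀ * ((d : ℤ) - i) ≤ k i * ((d : ℤ) - i₀) := by
          have p1 : (0 : ℚ) < (d : ℚ) - i₀ := by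
            have : (i₀ : ℚ) < d := by exact_mod_cast hi₀d
            linarith
          have p2 : (0 : ℚ) < (d : ℚ) - i := by
            have : (i : ℚ) < d := by exact_mod_cast hi
            linarith
          have := (div_le_div_iff₀ p1 p2).1 hle
          exact_mod_cast this
        have hei : (e : ℤ) = d - i₀ := by omega
        have hdi : ((d - i : ℕ) : ℤ) = d - i := by omega
        obtain ⟨m, hm⟩ := Int.eq_ofNat_of_zero_le
          (show 0 ≤ (e : ℤ) * k i + (-k i₀) * ((d - i : ℕ) : ℤ) by rw [hei, hdi]; linarith)
        have heq : f.coeff i * σ ^ (d - i) = th M ^ m * u := by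
          rw [hcu, th_level hN he0, ← hMdef, hσ, ← zpow_natCast (th M) e, ← zpow_mul,
            ← zpow_natCast (th M ^ (-k i₀)) (d - i), ← zpow_mul,
            ← zpow_natCast (th M) m, ← hm, zpow_add₀ hθ.ne']
          ring
        refine ⟨0 ^ m * r, ?_, by omega, by omega, ?_, ?_⟩
        · rw [heq]
          exact ((th_isO hM).pow m).mul (hu.lift hN he0)
        · rintro rfl
          exact absurd hz hc
        · rintro rfl
          have : m = 0 := by
            have : (m : ℤ) = 0 := by
              rw [← hm, hdi]; ring
            exact_mod_cast this
          rw [this]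
          simpa using hr
    · refine ⟨1, ?_, fun _ => rfl, by omega, by omega, by omega⟩
      have : f.coeff i = 1 := by rw [hi, ← hd]; exact hf
      rw [this, hi]
      simpa using IsO.one
    · refine ⟨0, ?_, by omega, fun _ => rfl, by omega, by omega⟩
      rw [coeff_eq_zero_of_natDegree_lt (by omega), zero_mul]
      exact IsO.zero
  choose r hr using hcoef
  obtain ⟨F₀, hF1, hF2, hF3⟩ := exists_poly d r ((hr d).2.1 rfl) (fun k hk => (hr k).2.2.1 hk)
  refine ivt_norm hM (i₀ := i₀) (scaleRoots f σ) F₀ ((monic_scaleRoots_iff σ).2 hf) hF1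
    ((natDegree_scaleRoots f σ).trans hd) hF2 (fun i => ?_) ?_ hi₀d ?_ ih
  · rw [hF3]; exact (hr i).1
  · rw [hF3]; exact (hr _).2.2.2.1 rfl
  · rw [hF3]; exact (hr _).2.2.2.2 rfl

theorem ivt_monic (d : ℕ) : ∀ f : PP[X], f.Monic → f.natDegree = d → HasIVT f := by
  induction d using Nat.strong_induction_on with
  | _ d ih =>
    intro f hf hd
    rcases Nat.eq_zero_or_pos d with h0 | h0
    · have : f = 1 := hf.natDegree_eq_zero.1 (hd.trans h0)
      rw [this]
      simpa using hasIVT_X_pow 0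
    set s : PP := - f.coeff (d - 1) / d with hs
    refine HasIVT.of_taylor s ?_
    have hd' : (taylor s f).natDegree = d := by rw [natDegree_taylor, hd]
    have hmon : (taylor s f).Monic := by
      rw [taylor_apply]; exact hf.comp_X_add_C s
    have hz : (taylor s f).coeff (d - 1) = 0 := by
      have hdeg : (hasseDeriv (d - 1) f).natDegree < 2 := by
        have := natDegree_hasseDeriv_le f (d - 1)
        omega
      rw [taylor_coeff, eval_eq_sum_range' hdeg]
      rw [Finset.sum_range_succ, Finset.sum_range_one, hasseDeriv_coeff, hasseDeriv_coeff]
      have e1 : 1 + (d - 1) = d := by omega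
      have e2 : f.coeff d = 1 := by rw [← hd]; exact hf
      have e3 : d.choose (d - 1) = d := by
        rw [Nat.choose_symm (by omega), Nat.choose_one_right]
      have hdne : (d : PP) ≠ 0 := by exact_mod_cast h0.ne'
      rw [e1, e2, e3, zero_add, Nat.choose_self, hs]
      field_simp
      simp
    by_cases hne : ∃ i < d, (taylor s f).coeff i ≠ 0
    · exact ivt_depressed _ hmon hd' hz h0 hne ih
    · push Not at hne
      have : taylor s f = X ^ d := by
        ext i : 1
        rw [coeff_X_pow]
        rcases lt_trichotomy i d with hi | hi | hi
        · rw [if_neg (by omega), hne i hi]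
        · rw [if_pos hi, hi, ← hd']; exact hmon
        · rw [if_neg (by omega), coeff_eq_zero_of_natDegree_lt (by omega)]
      rw [this]
      exact hasIVT_X_pow d

theorem polyIVT_PP : PolyIVT PP := by
  intro f a b hab h
  have hf : f ≠ 0 := by rintro rfl; simp at h
  have hl : f.leadingCoeff ≠ 0 := leadingCoeff_ne_zero.2 hf
  obtain ⟨c, h1, h2, h3⟩ := ivt_monic _ (f * C f.leadingCoeff⁻¹) (monic_mul_leadingCoeff_inv hf) rfl
    a b hab (by
      simp only [eval_mul, eval_C]
      have : eval a f * f.leadingCoeff⁻¹ * (eval b f * f.leadingCoeff⁻¹) =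
        (eval a f * eval b f) * (f.leadingCoeff⁻¹ ^ 2) := by ring
      rw [this]
      exact mul_neg_of_neg_of_pos h (by positivity))
  refine ⟨c, h1, h2, ?_⟩
  rw [eval_mul, eval_C] at h3
  exact (mul_eq_zero.1 h3).resolve_right (inv_ne_zero hl)

end IVT

section Final

open Topology

/-- constants -/
def cst : ℝ →+* PP :=
  RingHom.codRestrict ((rho 1).comp (Pi.constRingHom ℝ ℝ)) PP
    (fun c => ⟨1, _, one_ne_zero, MeromorphicAt.const c 0, rfl⟩)

/-- evaluation of real polynomials at the germ of the identity -/
def phi : ℝ[X] →+* PP := eval₂RingHom cst (th 1)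

theorem phi_coe (a : ℝ[X]) : (phi a : Gm) = rho 1 (fun τ => a.eval τ) := by
  induction a using Polynomial.induction_on' with
  | add p q hp hq =>
    rw [map_add]
    push_cast
    rw [hp, hq, ← map_add]
    congr 1
    funext τ
    simp
  | monomial n c =>
    have h1 : phi (monomial n c) = cst c * th 1 ^ n := by
      simp [phi]
    rw [h1]
    push_cast
    rw [th_coe one_ne_zero]
    have h2 : (cst c : Gm) = rho 1 (fun _ => c) := rfl
    rw [h2, ← map_pow, ← map_mul]
    congr 1
    funext τ
    simp

theorem phi_level {N : ℕ} (hN : N ≠ 0) (a : ℝ[X]) :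
    (phi a : Gm) = rho N (fun τ => a.eval (τ ^ N)) := by
  rw [phi_coe, rho_level one_ne_zero hN, one_mul]

theorem poly_mer (a : ℝ[X]) (N : ℕ) : MeromorphicAt (fun τ : ℝ => a.eval (τ ^ N)) 0 := by
  have h := (by fun_prop : AnalyticAt ℝ (fun τ : ℝ => τ ^ N) 0).aeval_polynomial a
  simp only [coe_aeval_eq_eval] at h
  exact h.meromorphicAt

theorem eval_coe {n N : ℕ} (hN : N ≠ 0) (x : Fin n → PP) (ξ : Fin n → ℝ → ℝ)
    (h1 : ∀ i, MeromorphicAt (ξ i) 0)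
    (hx : ∀ i, (x i : Gm) = rho N (ξ i)) (p : MvPolynomial (Fin n) ℝ[X]) :
    MeromorphicAt (fun τ => MvPolynomial.eval₂ (evalRingHom (τ ^ N)) (fun i => ξ i τ) p) 0 ∧
    ((MvPolynomial.eval₂ phi x p : PP) : Gm) =
      rho N (fun τ => MvPolynomial.eval₂ (evalRingHom (τ ^ N)) (fun i => ξ i τ) p) := by
  induction p using MvPolynomial.induction_on with
  | C a =>
    simp only [MvPolynomial.eval₂_C]
    exact ⟨poly_mer a N, phi_level hN a⟩
  | add p q hp hq =>
    simp only [MvPolynomial.eval₂_add]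
    refine ⟨hp.1.fun_add hq.1, ?_⟩
    push_cast
    rw [hp.2, hq.2, ← map_add]
    rfl
  | mul_X p i hp =>
    simp only [MvPolynomial.eval₂_mul, MvPolynomial.eval₂_X]
    refine ⟨hp.1.fun_mul (h1 i), ?_⟩
    push_cast
    rw [hp.2, hx, ← map_mul]
    rfl

theorem select (n : ℕ) (F : Finset (MvPolynomial (Fin n) ℝ[X])) :
    ∃ δ : ℝ, 0 < δ ∧ ∀ s, 0 < s → s < δ → ∀ x : Fin n → ℝ, ∃ (N : ℕ) (ξ : Fin n → ℝ → ℝ),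
      N ≠ 0 ∧ (∀ i, MeromorphicAt (ξ i) 0) ∧ ∀ p ∈ F, ∀ᶠ τ in 𝓝[>] (0 : ℝ),
        SignType.sign (MvPolynomial.eval₂ (evalRingHom (τ ^ N)) (fun i => ξ i τ) p) =
          SignType.sign (MvPolynomial.eval₂ (evalRingHom s) x p) := by
  obtain ⟨G, hG⟩ := transfer (A := ℝ[X]) polyIVT_real polyIVT_PP n F
  have hev : ∀ᶠ s in 𝓝[>] (0 : ℝ), ∀ a ∈ G,
      SignType.sign (evalRingHom s a) = SignType.sign (phi a) := by
    rw [Filter.eventually_all_finset]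
    intro a _
    have := mer_sign_eq (N := 1) one_ne_zero (poly_mer a 1)
    filter_upwards [this] with s hs
    rw [← phi_level one_ne_zero a] at hs
    simp only [pow_one] at hs
    exact hs
  obtain ⟨δ, hδ, hδ'⟩ := mem_nhdsGT_iff_exists_Ioo_subset.1 hev
  refine ⟨δ, hδ, fun s hs hsδ x => ?_⟩
  obtain ⟨x₂, hx₂⟩ := hG (evalRingHom s) phi (hδ' ⟨hs, hsδ⟩) x
  obtain ⟨N, hN, hL⟩ := exists_level Finset.univ x₂
  choose ξ h1 h2 using fun i => hL i (Finset.mem_univ i)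
  refine ⟨N, ξ, hN, h1, fun p hp => ?_⟩
  obtain ⟨h3, h4⟩ := eval_coe hN x₂ ξ h1 h2 p
  filter_upwards [mer_sign_eq hN h3] with τ hτ
  rw [hτ, ← h4, hx₂ p hp]
  rfl

/-- real polynomials as polynomials over `ℝ[X]` -/
def up {n : ℕ} (p : MvPolynomial (Fin n) ℝ) : MvPolynomial (Fin n) ℝ[X] := MvPolynomial.map C p

theorem eval_up {n : ℕ} (p : MvPolynomial (Fin n) ℝ) (s : ℝ) (x : Fin n → ℝ) :
    MvPolynomial.eval₂ (evalRingHom s) x (up p) = MvPolynomial.eval x p := by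
  rw [up, MvPolynomial.eval₂_map]
  have : (evalRingHom s).comp (C : ℝ →+* ℝ[X]) = RingHom.id ℝ := by
    ext c; simp
  rw [this, MvPolynomial.eval₂_id]

theorem tendsto_pow_zero {N : ℕ} (hN : N ≠ 0) :
    Tendsto (fun τ : ℝ => τ ^ N) (𝓝[>] 0) (𝓝 0) := by
  have : ContinuousAt (fun τ : ℝ => τ ^ N) 0 := by fun_prop
  have h2 := this.tendsto
  simp only [zero_pow hN] at h2
  exact h2.mono_left nhdsWithin_le_nhds

theorem limit_top {N : ℕ} (hN : N ≠ 0) (f : ℝ → ℝ)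
    (h : ∀ᶠ τ in 𝓝[>] (0 : ℝ), 0 < τ ^ N * f τ - 1) : Tendsto f (𝓝[>] 0) atTop := by
  have h1 : Tendsto (fun τ : ℝ => (τ ^ N)⁻¹) (𝓝[>] 0) atTop := by
    apply Tendsto.inv_tendsto_nhdsGT_zero
    rw [tendsto_nhdsWithin_iff]
    refine ⟨tendsto_pow_zero hN, ?_⟩
    filter_upwards [self_mem_nhdsWithin] with τ hτ
    exact Set.mem_Ioi.2 (pow_pos (Set.mem_Ioi.1 hτ) N)
  refine tendsto_atTop_mono' _ ?_ h1
  filter_upwards [h, self_mem_nhdsWithin] with τ h2 h3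
  have h4 : 0 < τ ^ N := pow_pos (Set.mem_Ioi.1 h3) N
  rw [inv_le_iff_one_le_mul₀ h4]
  linarith

theorem limit_poly {n : ℕ} (g : MvPolynomial (Fin n) ℝ) (c : EReal) :
    ∃ q : MvPolynomial (Fin n) ℝ[X],
      (∀ x : ℕ → Fin n → ℝ, Tendsto (fun k => ((MvPolynomial.eval (x k) g : ℝ) : EReal))
        atTop (𝓝 c) → ∀ s > 0, ∀ᶠ k in atTop, 0 < MvPolynomial.eval₂ (evalRingHom s) (x k) q) ∧
      ∀ (N : ℕ) (ξ : ℝ → Fin n → ℝ), N ≠ 0 → (∀ᶠ τ in 𝓝[>] (0 : ℝ),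
        0 < MvPolynomial.eval₂ (evalRingHom (τ ^ N)) (ξ τ) q) →
        Tendsto (fun τ => ((MvPolynomial.eval (ξ τ) g : ℝ) : EReal)) (𝓝[>] 0) (𝓝 c) := by
  induction c with
  | bot =>
    refine ⟨MvPolynomial.C X * up (-g) - 1, fun x hx s hs => ?_, fun N ξ hN h => ?_⟩
    · rw [EReal.tendsto_coe_nhds_bot_iff] at hx
      filter_upwards [hx.eventually (eventually_lt_atBot (-s⁻¹))] with k hk
      simp only [MvPolynomial.eval₂_sub, MvPolynomial.eval₂_mul, MvPolynomial.eval₂_C, eval_up,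
        MvPolynomial.eval₂_one, coe_evalRingHom, eval_X, map_neg]
      have h1 := mul_lt_mul_of_pos_left hk hs
      rw [mul_neg, mul_inv_cancel₀ hs.ne'] at h1
      linarith
    · rw [EReal.tendsto_coe_nhds_bot_iff]
      simp only [MvPolynomial.eval₂_sub, MvPolynomial.eval₂_mul, MvPolynomial.eval₂_C, eval_up,
        MvPolynomial.eval₂_one, coe_evalRingHom, eval_X, map_neg] at h
      exact tendsto_neg_atTop_iff.1 (limit_top hN _ h)
  | top =>
    refine ⟨MvPolynomial.C X * up g - 1, fun x hx s hs => ?_, fun N ξ hN h => ?_⟩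
    · rw [EReal.tendsto_coe_nhds_top_iff] at hx
      filter_upwards [hx.eventually (eventually_gt_atTop (s⁻¹))] with k hk
      simp only [MvPolynomial.eval₂_sub, MvPolynomial.eval₂_mul, MvPolynomial.eval₂_C, eval_up,
        MvPolynomial.eval₂_one, coe_evalRingHom, eval_X]
      have h1 := mul_lt_mul_of_pos_left hk hs
      rw [mul_inv_cancel₀ hs.ne'] at h1
      linarith
    · rw [EReal.tendsto_coe_nhds_top_iff]
      simp only [MvPolynomial.eval₂_sub, MvPolynomial.eval₂_mul, MvPolynomial.eval₂_C, eval_up,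
        MvPolynomial.eval₂_one, coe_evalRingHom, eval_X] at h
      exact limit_top hN _ h
  | coe c =>
    refine ⟨MvPolynomial.C X ^ 2 - up (g - MvPolynomial.C c) ^ 2, fun x hx s hs => ?_,
      fun N ξ hN h => ?_⟩
    · rw [EReal.tendsto_coe] at hx
      have h1 : Tendsto (fun k => MvPolynomial.eval (x k) g - c) atTop (𝓝 0) := by
        simpa using hx.sub_const c
      have h2 := h1.abs
      rw [abs_zero] at h2
      filter_upwards [h2.eventually (gt_mem_nhds hs)] with k hk
      simp only [MvPolynomial.eval₂_sub, MvPolynomial.eval₂_pow, MvPolynomial.eval₂_C, eval_up,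
        coe_evalRingHom, eval_X, map_sub, MvPolynomial.eval_C]
      rw [sub_pos]
      exact sq_lt_sq' (by linarith [neg_abs_le (MvPolynomial.eval (x k) g - c)])
        (lt_of_le_of_lt (le_abs_self _) hk)
    · rw [EReal.tendsto_coe]
      simp only [MvPolynomial.eval₂_sub, MvPolynomial.eval₂_pow, MvPolynomial.eval₂_C, eval_up,
        coe_evalRingHom, eval_X, map_sub, MvPolynomial.eval_C] at h
      have h1 : Tendsto (fun τ => MvPolynomial.eval (ξ τ) g - c) (𝓝[>] 0) (𝓝 0) := by
        apply squeeze_zero_norm' _ (tendsto_pow_zero hN)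
        filter_upwards [h, self_mem_nhdsWithin] with τ h2 h3
        have h4 : 0 < τ ^ N := pow_pos (Set.mem_Ioi.1 h3) N
        rw [Real.norm_eq_abs]
        exact (abs_lt_of_sq_lt_sq (sub_pos.1 h2) h4.le).le
      simpa using h1.add_const c

theorem extract {n N : ℕ} (hN : N ≠ 0) (ξ : Fin n → ℝ → ℝ) (hm : ∀ i, MeromorphicAt (ξ i) 0)
    (hbig : ∀ᶠ τ in 𝓝[>] (0 : ℝ), 0 < τ ^ N * (∑ i, ξ i τ ^ 2) - 1) :
    ∃ (α : ℤ) (y : ℝ → Fin n → ℝ), α < 0 ∧ AnalyticAt ℝ y 0 ∧ y 0 ≠ 0 ∧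
      ∀ᶠ τ in 𝓝[>] (0 : ℝ), (fun i => ξ i τ) = τ ^ α • y τ := by
  classical
  have h1 : ∀ i, ∃ (k : ℤ) (g : ℝ → ℝ), AnalyticAt ℝ g 0 ∧ (g 0 ≠ 0 ∨ g = 0) ∧
      ∀ᶠ τ in 𝓝[>] (0 : ℝ), ξ i τ = τ ^ k * g τ := by
    intro i
    rcases mer_cases (hm i) with h | ⟨k, g, h1, h2, h3⟩
    · exact ⟨0, 0, analyticAt_const, Or.inr rfl, by simpa using h⟩
    · exact ⟨k, g, h1, Or.inl h2, h3⟩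
  choose k g hg hg0 hξ using h1
  have hξ' : ∀ᶠ τ in 𝓝[>] (0 : ℝ), ∀ i, ξ i τ = τ ^ k i * g i τ :=
    Filter.eventually_all.2 hξ
  have hlim : Tendsto (fun τ => ∑ i, ξ i τ ^ 2) (𝓝[>] 0) atTop := limit_top hN _ hbig
  let S := Finset.univ.filter (fun i => g i 0 ≠ 0)
  have hS : S.Nonempty := by
    by_contra hcon
    rw [Finset.not_nonempty_iff_eq_empty, Finset.filter_eq_empty_iff] at hcon
    have hz : ∀ i, g i = 0 := fun i => (hg0 i).resolve_left (hcon (Finset.mem_univ i))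
    obtain ⟨τ, h2, h3⟩ := (hbig.and hξ').exists
    simp [h3, hz] at h2
    linarith
  obtain ⟨i₀, hi₀, hmin⟩ := S.exists_min_image k hS
  have hi₀' : g i₀ 0 ≠ 0 := (Finset.mem_filter.1 hi₀).2
  set α := k i₀ with hα
  let y : ℝ → Fin n → ℝ := fun τ i => τ ^ (k i - α).toNat * g i τ
  have hy : AnalyticAt ℝ y 0 := by
    rw [analyticAt_pi_iff]
    intro i
    exact (by fun_prop : AnalyticAt ℝ (fun τ : ℝ => τ ^ (k i - α).toNat) 0).fun_mul (hg i)
  have heq : ∀ᶠ τ in 𝓝[>] (0 : ℝ), (fun i => ξ i τ) = τ ^ α • y τ := by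
    filter_upwards [hξ', self_mem_nhdsWithin] with τ h2 h3
    have h3' : (0 : ℝ) < τ := h3
    funext i
    rw [h2 i]
    simp only [y, Pi.smul_apply, smul_eq_mul]
    rcases hg0 i with h4 | h4
    · have h5 := hmin i (Finset.mem_filter.2 ⟨Finset.mem_univ i, h4⟩)
      rw [← mul_assoc, ← zpow_natCast τ, Int.toNat_of_nonneg (by omega), ← zpow_add₀ h3'.ne']
      congr 2
      omega
    · simp [h4]
  refine ⟨α, y, ?_, hy, ?_, heq⟩
  · by_contra hcon
    obtain ⟨m, hm'⟩ := Int.eq_ofNat_of_zero_le (not_lt.1 hcon)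
    have hc : ContinuousAt (fun τ : ℝ => ∑ i, (τ ^ m * y τ i) ^ 2) 0 := by
      have : ∀ i, ContinuousAt (fun τ => y τ i) 0 := fun i =>
        (continuousAt_pi.1 hy.continuousAt) i
      fun_prop
    have h5 := hc.tendsto.mono_left (nhdsWithin_le_nhds (s := Set.Ioi (0 : ℝ)))
    refine not_tendsto_atTop_of_tendsto_nhds h5 (hlim.congr' ?_)
    filter_upwards [heq] with τ h6
    refine Finset.sum_congr rfl fun i _ => ?_
    have := congrFun h6 i
    simp only [Pi.smul_apply, smul_eq_mul, hm'] at this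
    rw [this]
    simp
  · intro h0
    have := congrFun h0 i₀
    simp [y, ← hα] at this
    exact hi₀' this

end Final

section Main

open Topology

theorem sq_norm_le {n : ℕ} (x : Fin n → ℝ) : ‖x‖ ≤ (∑ i, x i ^ 2) + 1 := by
  have h0 : 0 ≤ ∑ i, x i ^ 2 := Finset.sum_nonneg fun i _ => sq_nonneg _
  rw [pi_norm_le_iff_of_nonneg (by linarith)]
  intro i
  have h1 : x i ^ 2 ≤ ∑ i, x i ^ 2 :=
    Finset.single_le_sum (f := fun i => x i ^ 2) (fun i _ => sq_nonneg _) (Finset.mem_univ i)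
  rw [Real.norm_eq_abs]
  have h2 := sq_abs (x i)
  nlinarith [sq_nonneg (|x i| - 1)]

theorem final {n m : ℕ} (E Q : Fin m → Finset (MvPolynomial (Fin n) ℝ))
    (U : Set (Fin n → ℝ))
    (hU : U = ⋃ k : Fin m, {x | (∀ p ∈ E k, MvPolynomial.eval x p = 0) ∧
                          (∀ q ∈ Q k, 0 < MvPolynomial.eval x q)})
    (g : MvPolynomial (Fin n) ℝ) (c : EReal) (x : ℕ → (Fin n → ℝ)) (hx : ∀ k, x k ∈ U)
    (hnorm : Filter.Tendsto (fun k => ‖x k‖) Filter.atTop Filter.atTop)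
    (hg : Filter.Tendsto (fun k => ((MvPolynomial.eval (x k) g : ℝ) : EReal))
      Filter.atTop (nhds c)) :
    ∃ (α : ℤ) (ε : ℝ) (y : ℝ → (Fin n → ℝ)),
      α < 0 ∧ 0 < ε ∧
      (∀ t ∈ Set.Ioo (-ε) ε, AnalyticAt ℝ y t) ∧
      y 0 ≠ 0 ∧
      (∀ t ∈ Set.Ioo (0 : ℝ) ε, (t ^ α) • y t ∈ U) ∧
      Filter.Tendsto (fun t : ℝ => ((MvPolynomial.eval ((t ^ α) • y t) g : ℝ) : EReal))
        (nhdsWithin 0 (Set.Ioi 0)) (nhds c) := by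
  classical
  obtain ⟨q, hq1, hq2⟩ := limit_poly g c
  let r : MvPolynomial (Fin n) ℝ[X] :=
    MvPolynomial.C X * up (∑ i, MvPolynomial.X i ^ 2) - 1
  have hr : ∀ s (z : Fin n → ℝ), MvPolynomial.eval₂ (evalRingHom s) z r =
      s * (∑ i, z i ^ 2) - 1 := by
    intro s z
    simp only [r, MvPolynomial.eval₂_sub, MvPolynomial.eval₂_mul, MvPolynomial.eval₂_C, eval_up,
        MvPolynomial.eval₂_one, coe_evalRingHom, eval_X, map_sum, map_pow, MvPolynomial.eval_X]
  let F : Finset (MvPolynomial (Fin n) ℝ[X]) :=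
    insert q (insert r (Finset.univ.biUnion fun k => (E k ∪ Q k).image up))
  obtain ⟨δ, hδ, hsel⟩ := select n F
  have hs : 0 < δ / 2 := by linarith
  have hbigx : ∀ᶠ k in atTop, 0 < (δ / 2) * (∑ i, x k i ^ 2) - 1 := by
    filter_upwards [hnorm.eventually (eventually_gt_atTop ((δ / 2)⁻¹ + 1))] with k hk
    have h1 := sq_norm_le (x k)
    have h2 : (δ / 2)⁻¹ < ∑ i, x k i ^ 2 := by linarith
    have h3 := mul_lt_mul_of_pos_left h2 hs
    rw [mul_inv_cancel₀ hs.ne'] at h3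
    linarith
  obtain ⟨k, hk1, hk2⟩ := (hbigx.and (hq1 x hg _ hs)).exists
  obtain ⟨N, ξ, hN, hm, hsign⟩ := hsel (δ / 2) hs (by linarith) (x k)
  have hqF : q ∈ F := Finset.mem_insert_self _ _
  have hrF : r ∈ F := Finset.mem_insert_of_mem (Finset.mem_insert_self _ _)
  have hbig : ∀ᶠ τ in 𝓝[>] (0 : ℝ), 0 < τ ^ N * (∑ i, ξ i τ ^ 2) - 1 := by
    filter_upwards [hsign r hrF] with τ hτ
    rw [hr, hr, sign_pos hk1, sign_eq_one_iff] at hτ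
    exact hτ
  have hlim := hq2 N (fun τ i => ξ i τ) hN (by
    filter_upwards [hsign q hqF] with τ hτ
    rw [sign_pos hk2, sign_eq_one_iff] at hτ
    exact hτ)
  have hxk := hx k
  rw [hU, Set.mem_iUnion] at hxk
  obtain ⟨j, hjE, hjQ⟩ := hxk
  have hmemF : ∀ p, p ∈ E j ∪ Q j → up p ∈ F := fun p hp =>
    Finset.mem_insert_of_mem (Finset.mem_insert_of_mem
      (Finset.mem_biUnion.2 ⟨j, Finset.mem_univ j, Finset.mem_image_of_mem _ hp⟩))
  have hUmem : ∀ᶠ τ in 𝓝[>] (0 : ℝ), (fun i => ξ i τ) ∈ U := by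
    have e1 : ∀ᶠ τ in 𝓝[>] (0 : ℝ), ∀ p ∈ E j, MvPolynomial.eval (fun i => ξ i τ) p = 0 := by
      rw [Filter.eventually_all_finset]
      intro p hp
      filter_upwards [hsign _ (hmemF p (Finset.mem_union_left _ hp))] with τ hτ
      rw [eval_up, eval_up, hjE p hp, sign_zero, sign_eq_zero_iff] at hτ
      exact hτ
    have e2 : ∀ᶠ τ in 𝓝[>] (0 : ℝ), ∀ p ∈ Q j, 0 < MvPolynomial.eval (fun i => ξ i τ) p := by
      rw [Filter.eventually_all_finset]
      intro p hp
      filter_upwards [hsign _ (hmemF p (Finset.mem_union_right _ hp))] with τ hτ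
      rw [eval_up, eval_up, sign_pos (hjQ p hp), sign_eq_one_iff] at hτ
      exact hτ
    filter_upwards [e1, e2] with τ h1 h2
    rw [hU, Set.mem_iUnion]
    exact ⟨j, h1, h2⟩
  obtain ⟨α, y, hα, hy, hy0, heq⟩ := extract hN ξ hm hbig
  have hU2 : ∀ᶠ τ in 𝓝[>] (0 : ℝ), τ ^ α • y τ ∈ U := by
    filter_upwards [hUmem, heq] with τ h1 h2
    rwa [← h2]
  obtain ⟨δ₁, hδ₁, hδ₁'⟩ := mem_nhdsGT_iff_exists_Ioo_subset.1 hU2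
  obtain ⟨δ₂, hδ₂, hδ₂'⟩ := Metric.eventually_nhds_iff.1 hy.eventually_analyticAt
  refine ⟨α, min δ₁ δ₂, y, hα, lt_min hδ₁ hδ₂, ?_, hy0, ?_, ?_⟩
  · intro t ht
    apply hδ₂'
    rw [Real.dist_eq, sub_zero, abs_lt]
    have := min_le_right δ₁ δ₂
    exact ⟨by linarith [ht.1], by linarith [ht.2]⟩
  · intro t ht
    exact hδ₁' ⟨ht.1, lt_of_lt_of_le ht.2 (min_le_left _ _)⟩
  · refine hlim.congr' ?_
    filter_upwards [heq] with τ h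
    simp only [h]

end Main

end CSL

/-- Curve Selection Lemma at infinity. -/
theorem curve_selection_at_infinity {n : ℕ} (U : Set (Fin n → ℝ)) (hU : IsSemialgebraic U)
    (g : MvPolynomial (Fin n) ℝ) (c : EReal) (x : ℕ → (Fin n → ℝ)) (hx : ∀ k, x k ∈ U)
    (hnorm : Filter.Tendsto (fun k => ‖x k‖) Filter.atTop Filter.atTop)
    (hg : Filter.Tendsto (fun k => ((MvPolynomial.eval (x k) g : ℝ) : EReal))
      Filter.atTop (nhds c)) :
    ∃ (α : ℤ) (ε : ℝ) (y : ℝ → (Fin n → ℝ)),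
      α < 0 ∧ 0 < ε ∧
      (∀ t ∈ Set.Ioo (-ε) ε, AnalyticAt ℝ y t) ∧
      y 0 ≠ 0 ∧
      (∀ t ∈ Set.Ioo (0 : ℝ) ε, (t ^ α) • y t ∈ U) ∧
      Filter.Tendsto (fun t : ℝ => ((MvPolynomial.eval ((t ^ α) • y t) g : ℝ) : EReal))
        (nhdsWithin 0 (Set.Ioi 0)) (nhds c) := by
  obtain ⟨m, E, Q, hEQ⟩ := hU
  exact CSL.final E Q U hEQ g c x hx hnorm hg
end
end

section
/- For every mixed polynomial f : ℂⁿ → ℂ, the set S(f) of asymptotic ρ-nonregular values is a closed subset of ℂ. -/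
open Complex Filter Finset

noncomputable section

/-- `S(f)` is closed. -/
theorem Sset_isClosed {n : ℕ} (c : MixedCoeff n) : IsClosed (Mixed.Sset c) := by
  rw [← closure_subset_iff_isClosed]
  intro v hv
  have key : ∀ k : ℕ, ∃ z : Fin n → ℂ, z ∈ Mixed.Milnor c ∧ (k : ℝ) ≤ ‖z‖ ∧
      dist (Mixed.eval c z) v < 2 * (1 / ((k : ℝ) + 1)) := by
    intro k
    have hk : (0 : ℝ) < 1 / ((k : ℝ) + 1) := Nat.one_div_pos_of_nat
    obtain ⟨w, ⟨zk, hM, hn, hf⟩, hw⟩ := Metric.mem_closure_iff.1 hv _ hk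
    obtain ⟨j, hj1, hj2⟩ := ((hn.eventually_ge_atTop (k : ℝ)).and
      (hf.eventually (Metric.ball_mem_nhds w hk))).exists
    refine ⟨zk j, hM j, hj1, ?_⟩
    have h1 : dist (Mixed.eval c (zk j)) w < 1 / ((k : ℝ) + 1) := hj2
    have h2 := dist_triangle (Mixed.eval c (zk j)) w v
    rw [dist_comm w v] at h2
    linarith
  choose z hM hn hf using key
  refine ⟨z, hM, tendsto_atTop_mono hn tendsto_natCast_atTop_atTop, ?_⟩
  rw [tendsto_iff_dist_tendsto_zero]
  have h0 : Tendsto (fun k : ℕ => 2 * (1 / ((k : ℝ) + 1))) atTop (nhds 0) := by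
    simpa using (tendsto_one_div_add_atTop_nhds_zero_nat (𝕜 := ℝ)).const_mul 2
  exact squeeze_zero (fun _ => dist_nonneg) (fun k => (hf k).le) h0
end
end
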